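/- Let p ≥ 80 be a prime, let m be an integer with 2 ≤ m ≤ p−2, and let c be a real number in (0,1) satisfying the equation (7 + √(8·c·p·sin(π/p)/sin(π·c/3) + 9))·c = 4 + 12/p. Then every m-sum-free subset A ⊆ ℤ/pℤ satisfies |A| < c·p. -/

import Mathlib

/-!
Suppose that `A` is `m`-sum-free and `|A| = k ≥ c p`. The dilate `m • A` is disjoint from `A + A`, so
`N = |A + A| ≤ p - k`.

*Fourier analysis.* By Parseval and Cauchy–Schwarz some nontrivial Fourier coefficient of `A` is at
least `k² / N` (`card_sq_le_of_expSum_le`). If every progression of `(p + 1) / 2` terms contained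
at most `(N + 3) / 3` elements of `A`, a rearrangement inequality for sums of cosines would bound all
these coefficients from above (`sum_cos_le`, `norm_expSum_le`). The equation defining `c` is
exactly what makes the two estimates contradictory; with a suitable `α ∈ [0, 1/5]` it reads
`(3 + α) c p = p + 3` and `(2α + 1)(α + 2) sin (π c / 3) = c p sin (π / p)` (`exists_param`). So some
progression of `(p + 1) / 2` terms contains `n` elements of `A` with `3 n ≥ N + 4` (`exists_window`).

*Rectification.* These `n` elements add up as integers do, and Freiman's `3k - 4` theorem (`freiman`)
puts them in a short progression, with a sumset containing a long interval. The complement of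
`A + A` is then confined to an arc, and a sumset estimate for the dense part of `A` and that
complement confines all of `A` to a progression of `(p + 1) / 2` terms (`exists_arc`). Freiman's
theorem now applies to the whole of `A`: it is an affine image of some `I ⊆ [0, a]` such that `I + I`
contains an interval of at least `2 k - 1` integers.

*Dilation.* By `m`-sum-freeness, `m • I` modulo `p` avoids a translate of that interval, hence lies
in an arc of at most `p - 2 k + 1` residues. All `j ≤ 4 k - p - 2` are differences of elements of `I`,
so each `m j` lies within `p - 2 k` of a multiple of `p`. As `m` is not `0` or `±1` modulo `p`, the
multiples of `m` cannot avoid the gaps between these neighbourhoods (`dilate_false`).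
-/

section
open Finset Pointwise

/-! ### Long intervals in sumsets of dense sets of integers -/

lemma card_le_of_cover {α : Type*} (A : Finset α) (P Q : α → Prop) [DecidablePred P]
    [DecidablePred Q] (h : ∀ x ∈ A, P x ∨ Q x) :
    A.card ≤ (A.filter P).card + (A.filter Q).card := by
  classical
  refine (card_le_card ?_).trans (card_union_le _ _)
  intro x hx
  simp only [mem_union, mem_filter]
  have := h x hx
  tauto

/-- If `y ∉ A + B`, then `A` and the reflection `y - B` are disjoint, so together they have at most
`r - l + 1` elements in `[l, r]`. -/
lemma card_miss {A B : Finset ℤ} {y l r : ℤ} (h : y ∉ A + B) (hlr : l ≤ r + 1) :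
    ((A.filter (fun t => l ≤ t ∧ t ≤ r)).card : ℤ)
      + ((B.filter (fun t => y - r ≤ t ∧ t ≤ y - l)).card : ℤ) ≤ r - l + 1 := by
  have hinj : Function.Injective (fun t : ℤ => y - t) := fun s t hst => by
    simpa using hst
  rw [← card_image_of_injective (B.filter _) hinj, ← Nat.cast_add, ← card_union_of_disjoint]
  · have : ((Icc l r).card : ℤ) = r - l + 1 := by
      rw [Int.card_Icc]; omega
    rw [← this]
    refine Nat.cast_le.2 (card_le_card ?_)
    intro x hx
    simp only [mem_union, mem_filter, mem_image, mem_Icc] at hx ⊢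
    rcases hx with hx | ⟨t, ht, rfl⟩
    · omega
    · omega
  · rw [Finset.disjoint_left]
    intro x hx hx'
    simp only [mem_filter, mem_image] at hx hx'
    obtain ⟨t, ht, rfl⟩ := hx'
    exact h (mem_add.2 ⟨_, hx.1, t, ht.1, by ring⟩)

/-- If `A, B ⊆ [0, b]` have at least `b + 3` elements in total, then every residue class modulo `b`
is represented in `A + B`, by its least representative or by the next one. -/
lemma mod_cover {A B : Finset ℤ} {b : ℤ} (hA : ∀ x ∈ A, 0 ≤ x ∧ x ≤ b)
    (hB : ∀ x ∈ B, 0 ≤ x ∧ x ≤ b) (hc : b + 3 ≤ A.card + B.card) {r : ℤ} (hr0 : 0 ≤ r)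
    (hrb : r ≤ b) : r ∈ A + B ∨ r + b ∈ A + B := by
  by_contra! hcon
  have h1 := card_miss (l := 0) (r := r) hcon.1 (by omega)
  have h2 := card_miss (l := r) (r := b) hcon.2 (by omega)
  have h3 := card_le_of_cover A (fun t => 0 ≤ t ∧ t ≤ r) (fun t => r ≤ t ∧ t ≤ b)
    (fun x hx => by have := hA x hx; omega)
  have h4 := card_le_of_cover B (fun t => r - r ≤ t ∧ t ≤ r - 0)
    (fun t => r + b - b ≤ t ∧ t ≤ r + b - r)
    (fun x hx => by have := hB x hx; omega)
  omega

/-- Every residue modulo `b` is hit by `A + B`, and those of `A` (via `0, b ∈ B`) and of `E` are hit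
twice. -/
lemma card_add_ge {A B : Finset ℤ} {a b : ℤ} (hab : a ≤ b) (hA : ∀ x ∈ A, 0 ≤ x ∧ x ≤ a)
    (hB : ∀ x ∈ B, 0 ≤ x ∧ x ≤ b) (hB0 : 0 ∈ B) (hBb : b ∈ B)
    (hc : b + 3 ≤ A.card + B.card) (E : Finset ℤ)
    (hE : ∀ y ∈ E, (0 ≤ y ∧ y ≤ b) ∧ y ∈ A + B ∧ y + b ∈ A + B) :
    b + (A ∪ E).card ≤ (A + B).card := by
  -- `Lo` and `Hi` record the low and the high representatives in `A + B` of residues modulo `b`.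
  set Lo := (Icc 0 b).filter (fun y => y ∈ A + B) with hLo
  set Hi := (Icc 0 b).filter (fun y => y + b ∈ A + B) with hHi
  have hb0 : 0 ≤ b := (hB b hBb).1
  have h1 : (Icc 0 b).card ≤ (Lo ∪ Hi).card := by
    refine card_le_card fun y hy => ?_
    have hy' := mem_Icc.1 hy
    have := mod_cover (fun x hx => ⟨(hA x hx).1, (hA x hx).2.trans hab⟩) hB hc hy'.1 hy'.2
    simp only [hLo, hHi, mem_union, mem_filter]
    tauto
  have h2 : (A ∪ E).card ≤ (Lo ∩ Hi).card := by
    refine card_le_card fun y hy => ?_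
    simp only [hLo, hHi, mem_inter, mem_filter, mem_Icc]
    rcases mem_union.1 hy with hy | hy
    · have := hA y hy
      have h3 : y ∈ A + B := mem_add.2 ⟨y, hy, 0, hB0, by ring⟩
      have h4 : y + b ∈ A + B := mem_add.2 ⟨y, hy, b, hBb, by ring⟩
      refine ⟨⟨by omega, h3⟩, ⟨by omega, h4⟩⟩
    · have := hE y hy
      tauto
  have h3 := card_union_add_card_inter Lo Hi
  have hinj : Function.Injective (fun t : ℤ => t + b) := fun s t hst => by
    simpa using hst
  have h4 : Lo.card + Hi.card ≤ (A + B).card + 1 := by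
    rw [← card_image_of_injective Hi hinj, ← card_union_add_card_inter]
    refine add_le_add (card_le_card ?_) ?_
    · refine union_subset (fun y hy => (mem_filter.1 hy).2) fun y hy => ?_
      obtain ⟨t, ht, rfl⟩ := mem_image.1 hy
      exact (mem_filter.1 ht).2
    · rw [card_le_one]
      intro y hy y' hy'
      simp only [hLo, hHi, mem_inter, mem_filter, mem_image, mem_Icc] at hy hy'
      obtain ⟨⟨hy1, -⟩, t, ⟨ht, -⟩, hyt⟩ := hy
      obtain ⟨⟨hy1', -⟩, t', ⟨ht', -⟩, hyt'⟩ := hy'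
      omega
  have h5 : ((Icc 0 b).card : ℤ) = b + 1 := by rw [Int.card_Icc]; omega
  omega

/-- The sumset of two dense sets of integers with small doubling contains an interval of length at
least `|A| + |B| - 1`. Call `x` a low hole if `x ∉ A + B`, and `z` a high hole if `z + b ∉ A + B`. If
every high hole exceeds every low hole, the numbers strictly between the last low hole and the
first shifted high hole form the interval, and its length is estimated by `card_miss` at both ends.
Otherwise a closest pair `z < x` of holes in the wrong order makes all residues in `(z, x)` doubly
represented, and then `A + B` is too large by `card_add_ge`. -/
lemma exists_long_interval {A B : Finset ℤ} {a b : ℤ} (hab : a ≤ b)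
    (hA : ∀ x ∈ A, 0 ≤ x ∧ x ≤ a)
    (hB : ∀ x ∈ B, 0 ≤ x ∧ x ≤ b) (hB0 : 0 ∈ B) (hBb : b ∈ B)
    (hc : b + 3 ≤ A.card + B.card) (hS : (A + B).card + 4 ≤ 2 * A.card + B.card) :
    ∃ lo hi : ℤ, (∀ y, lo ≤ y → y ≤ hi → y ∈ A + B) ∧
      (A.card : ℤ) + B.card ≤ hi - lo + 2 := by
  have hb0 : 0 ≤ b := (hB b hBb).1
  have hane : A.Nonempty := by
    rw [nonempty_iff_ne_empty]
    intro h
    have h1 : B.card ≤ (Icc 0 b).card := card_le_card fun x hx => mem_Icc.2 (hB x hx)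
    rw [Int.card_Icc] at h1
    rw [h, card_empty] at hc
    omega
  have ha0 : 0 ≤ a := by
    obtain ⟨x, hx⟩ := hane
    have := hA x hx; omega
  have hSle : ∀ y ∈ A + B, 0 ≤ y ∧ y ≤ a + b := by
    intro y hy
    obtain ⟨s, hs, t, ht, rfl⟩ := mem_add.1 hy
    have := hA s hs
    have := hB t ht
    omega
  have hcov : ∀ r, 0 ≤ r → r ≤ b → r ∈ A + B ∨ r + b ∈ A + B := fun r h0 h1 =>
    mod_cover (fun x hx => ⟨(hA x hx).1, (hA x hx).2.trans hab⟩) hB hc h0 h1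
  -- The ranges include the trivial holes `-1` and `a + 1`, so that both sets are nonempty.
  set X := (Icc (-1) b).filter (fun y => y ∉ A + B) with hX
  set Z := (Icc 0 (a + 1)).filter (fun y => y + b ∉ A + B) with hZ
  have hXm : -1 ∈ X := by
    simp only [hX, mem_filter, mem_Icc]
    exact ⟨by omega, fun h => by have := hSle _ h; omega⟩
  have hZm : a + 1 ∈ Z := by
    simp only [hZ, mem_filter, mem_Icc]
    exact ⟨by omega, fun h => by have := hSle _ h; omega⟩
  have hXs : ∀ x ∈ X, ((A.filter (fun t => 0 ≤ t ∧ t ≤ x)).card : ℤ)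
      + (B.filter (fun t => x - x ≤ t ∧ t ≤ x - 0)).card ≤ x - 0 + 1 := by
    intro x hx
    simp only [hX, mem_filter, mem_Icc] at hx
    exact card_miss hx.2 (by omega)
  have hZs : ∀ z ∈ Z, ((A.filter (fun t => z ≤ t ∧ t ≤ a)).card : ℤ)
      + (B.filter (fun t => z + b - a ≤ t ∧ t ≤ z + b - z)).card ≤ a - z + 1 := by
    intro z hz
    simp only [hZ, mem_filter, mem_Icc] at hz
    exact card_miss hz.2 (by omega)
  set T := (X ×ˢ Z).filter (fun q => q.2 < q.1) with hT
  rcases T.eq_empty_or_nonempty with hTe | hTne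
  · obtain ⟨x, hx, hxm⟩ := X.exists_max_image id ⟨_, hXm⟩
    obtain ⟨z, hz, hzm⟩ := Z.exists_min_image id ⟨_, hZm⟩
    simp only [id] at hxm hzm
    have hxz : ¬ z < x := fun h => by
      have : (x, z) ∈ T := by simp [hT, hx, hz, h]
      simp [hTe] at this
    have h1 := hXs x hx
    have h2 := hZs z hz
    simp only [hX, hZ, mem_filter, mem_Icc] at hx hz hxm hzm
    have hne : x ≠ z := by
      rintro rfl
      rcases hcov x (by omega) (by omega) with h | h
      · exact hx.2 h
      · exact hz.2 h
    refine ⟨x + 1, b + z - 1, fun y hy1 hy2 => ?_, ?_⟩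
    · by_contra hcon
      by_cases hyb : y ≤ b
      · have := hxm y ⟨by omega, hcon⟩
        omega
      · have := hzm (y - b) ⟨by omega, by rwa [sub_add_cancel]⟩
        omega
    · have h3 := card_le_of_cover A (fun t => 0 ≤ t ∧ t ≤ x) (fun t => x + 1 ≤ t)
        (fun t ht => by have := hA t ht; omega)
      have h4 := card_le_of_cover (A.filter (fun t => x + 1 ≤ t)) (fun t => t ≤ z - 1)
        (fun t => z ≤ t ∧ t ≤ a)
        (fun t ht => by have := hA t (mem_filter.1 ht).1; omega)
      have h5 : (((A.filter (fun t => x + 1 ≤ t)).filter (fun t => t ≤ z - 1)).card : ℤ)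
          ≤ z - 1 - x := by
        have : ((Icc (x + 1) (z - 1)).card : ℤ) = z - 1 - x := by rw [Int.card_Icc]; omega
        rw [← this]
        refine Nat.cast_le.2 (card_le_card fun t ht => ?_)
        simp only [mem_filter, mem_Icc] at ht ⊢
        omega
      have h6 : ((A.filter (fun t => x + 1 ≤ t)).filter (fun t => z ≤ t ∧ t ≤ a)).card
          ≤ (A.filter (fun t => z ≤ t ∧ t ≤ a)).card :=
        card_le_card (filter_subset_filter _ (filter_subset _ _))
      have h3' := card_le_of_cover B (fun t => x - x ≤ t ∧ t ≤ x - 0) (fun t => x + 1 ≤ t)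
        (fun t ht => by have := hB t ht; omega)
      have h4' := card_le_of_cover (B.filter (fun t => x + 1 ≤ t)) (fun t => t ≤ z + b - a - 1)
        (fun t => z + b - a ≤ t ∧ t ≤ z + b - z)
        (fun t ht => by have := hB t (mem_filter.1 ht).1; omega)
      have h5' : (((B.filter (fun t => x + 1 ≤ t)).filter
          (fun t => t ≤ z + b - a - 1)).card : ℤ) ≤ z + b - a - 1 - x := by
        have : ((Icc (x + 1) (z + b - a - 1)).card : ℤ) = z + b - a - 1 - x := by
          rw [Int.card_Icc]; omega
        rw [← this]
        refine Nat.cast_le.2 (card_le_card fun t ht => ?_)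
        simp only [mem_filter, mem_Icc] at ht ⊢
        omega
      have h6' : ((B.filter (fun t => x + 1 ≤ t)).filter
          (fun t => z + b - a ≤ t ∧ t ≤ z + b - z)).card
          ≤ (B.filter (fun t => z + b - a ≤ t ∧ t ≤ z + b - z)).card :=
        card_le_card (filter_subset_filter _ (filter_subset _ _))
      omega
  · exfalso
    obtain ⟨⟨x, z⟩, hxz, hmin⟩ := T.exists_min_image (fun q => q.1 - q.2) hTne
    simp only [hT, mem_filter, mem_product] at hxz
    obtain ⟨⟨hx, hz⟩, hlt⟩ := hxz
    have h1 := hXs x hx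
    have h2 := hZs z hz
    have hmin' : ∀ x' z', x' ∈ X → z' ∈ Z → z' < x' → x - z ≤ x' - z' := by
      intro x' z' hx' hz' h
      exact hmin (x', z') (by simp [hT, hx', hz', h])
    simp only [hX, hZ, mem_filter, mem_Icc] at hx hz hmin'
    have hxa : x ≤ a := by
      rcases hcov x (by omega) (by omega) with h | h
      · exact absurd h hx.2
      · have := hSle _ h; omega
    have hD : ∀ y ∈ Ioo z x, (0 ≤ y ∧ y ≤ b) ∧ y ∈ A + B ∧ y + b ∈ A + B := by
      intro y hy
      rw [mem_Ioo] at hy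
      refine ⟨by omega, ?_, ?_⟩
      · by_contra hcon
        have := hmin' y z ⟨by omega, hcon⟩ hz hy.1
        omega
      · by_contra hcon
        have := hmin' x y hx ⟨by omega, hcon⟩ hy.2
        omega
    have h3 := card_add_ge hab hA hB hB0 hBb hc (Ioo z x) hD
    have h4 := card_union_add_card_inter A (Ioo z x)
    have h5 : ((Ioo z x).card : ℤ) = x - z - 1 := by rw [Int.card_Ioo]; omega
    have h6 : A.card + (A ∩ Ioo z x).card ≤ (A.filter (fun t => 0 ≤ t ∧ t ≤ x)).card
        + (A.filter (fun t => z ≤ t ∧ t ≤ a)).card := by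
      rw [← card_union_add_card_inter (A.filter (fun t => 0 ≤ t ∧ t ≤ x))
        (A.filter (fun t => z ≤ t ∧ t ≤ a))]
      refine add_le_add (card_le_card fun t ht => ?_) (card_le_card fun t ht => ?_)
      · have := hA t ht
        simp only [mem_union, mem_filter, ht, true_and]
        omega
      · simp only [mem_inter, mem_filter, mem_Ioo] at ht ⊢
        have := hA t ht.1
        refine ⟨⟨ht.1, by omega⟩, ⟨ht.1, by omega⟩⟩
    have h7 := card_le_of_cover B (fun t => x - x ≤ t ∧ t ≤ x - 0) (fun t => x + 1 ≤ t)
        (fun t ht => by have := hB t ht; omega)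
    have h8 := card_le_of_cover (B.filter (fun t => x + 1 ≤ t)) (fun t => t ≤ z + b - a - 1)
        (fun t => z + b - a ≤ t ∧ t ≤ z + b - z)
        (fun t ht => by have := hB t (mem_filter.1 ht).1; omega)
    have h9 : (((B.filter (fun t => x + 1 ≤ t)).filter
          (fun t => t ≤ z + b - a - 1)).card : ℤ) ≤ max 0 (z + b - a - 1 - x) := by
        have : ((Icc (x + 1) (z + b - a - 1)).card : ℤ) = max 0 (z + b - a - 1 - x) := by
          rw [Int.card_Icc]; omega
        rw [← this]
        refine Nat.cast_le.2 (card_le_card fun t ht => ?_)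
        simp only [mem_filter, mem_Icc] at ht ⊢
        omega
    have h10 : ((B.filter (fun t => x + 1 ≤ t)).filter
          (fun t => z + b - a ≤ t ∧ t ≤ z + b - z)).card
          ≤ (B.filter (fun t => z + b - a ≤ t ∧ t ≤ z + b - z)).card :=
        card_le_card (filter_subset_filter _ (filter_subset _ _))
    omega

/-! ### Freiman's `3k - 4` theorem -/

lemma card_add_self_ge {A : Finset ℤ} (h : A.Nonempty) : 2 * A.card ≤ (A + A).card + 1 := by
  have := cauchy_davenport_add_of_linearOrder_isCancelAdd h h
  omega

/-- If `A + A` already contains an interval of length at least `2 |A| - 1`, then adjoining an element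
`v` beyond the end of `A` produces a sumset of at least `3 |A|` elements: the part of `A` below the
interval, the interval, the part of `v + A` above it, and `2 v`. -/
lemma card_insert_far {A : Finset ℤ} {b v lo hi : ℤ} (hA : ∀ x ∈ A, 0 ≤ x ∧ x ≤ b) (h0 : 0 ∈ A)
    (hI : ∀ y, lo ≤ y → y ≤ hi → y ∈ A + A) (hlen : 2 * (A.card : ℤ) ≤ hi - lo + 2)
    (hv : b < v) (hv' : 2 * (A.card : ℤ) ≤ v + 1) :
    3 * A.card ≤ (insert v A + insert v A).card := by
  have hpos : 0 < A.card := card_pos.2 ⟨_, h0⟩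
  have hlohi : lo ≤ hi := by omega
  have hhi : hi ≤ 2 * b := by
    obtain ⟨s, hs, t, ht, h⟩ := mem_add.1 (hI hi hlohi le_rfl)
    have := hA s hs
    have := hA t ht
    omega
  have hlo0 : 0 ≤ lo := by
    obtain ⟨s, hs, t, ht, h⟩ := mem_add.1 (hI lo le_rfl hlohi)
    have := hA s hs
    have := hA t ht
    omega
  set P := A.filter (fun t => t < lo) with hP
  set Q := A.filter (fun t => hi - v < t) with hQ
  have hinj : Function.Injective (fun t : ℤ => v + t) := fun s t hst => by
    simpa using hst
  have hsub : ((P ∪ Icc lo hi) ∪ Q.image (fun t => v + t)) ∪ {2 * v}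
      ⊆ insert v A + insert v A := by
    intro y hy
    simp only [mem_union, hP, hQ, mem_filter, mem_Icc, mem_image, mem_singleton] at hy
    rcases hy with ((hy | hy) | ⟨t, ht, rfl⟩) | rfl
    · exact mem_add.2 ⟨0, by simp [h0], y, by simp [hy.1], by ring⟩
    · exact add_subset_add (subset_insert _ _) (subset_insert _ _) (hI y hy.1 hy.2)
    · exact mem_add.2 ⟨v, by simp, t, by simp [ht.1], by ring⟩
    · exact mem_add.2 ⟨v, by simp, v, by simp, by ring⟩
  have hcard := card_le_card hsub
  have d1 : Disjoint P (Icc lo hi) := by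
    rw [Finset.disjoint_left]
    intro y hy hy'
    simp only [hP, mem_filter, mem_Icc] at hy hy'
    omega
  have d2 : Disjoint (P ∪ Icc lo hi) (Q.image (fun t => v + t)) := by
    rw [Finset.disjoint_left]
    intro y hy hy'
    simp only [hP, hQ, mem_union, mem_filter, mem_Icc, mem_image] at hy hy'
    obtain ⟨t, ht, rfl⟩ := hy'
    omega
  have d3 : Disjoint ((P ∪ Icc lo hi) ∪ Q.image (fun t => v + t)) {2 * v} := by
    rw [Finset.disjoint_right]
    intro y hy hy'
    simp only [hP, hQ, mem_union, mem_filter, mem_Icc, mem_image, mem_singleton] at hy hy'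
    rcases hy' with (hy' | hy') | ⟨t, ht, rfl⟩
    · have := hA y hy'.1
      omega
    · omega
    · have := hA t ht.1
      omega
  rw [card_union_of_disjoint d3, card_union_of_disjoint d2, card_union_of_disjoint d1,
    card_image_of_injective _ hinj, card_singleton, Int.card_Icc] at hcard
  have h1 : A.card ≤ P.card + (A.filter (fun t => lo ≤ t)).card :=
    card_le_of_cover A (fun t => t < lo) (fun t => lo ≤ t) (fun t _ => by omega)
  have h2 := card_le_of_cover (A.filter (fun t => lo ≤ t)) (fun t => t ≤ hi - v)
    (fun t => hi - v < t) (fun t _ => by omega)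
  have h3 : ((A.filter (fun t => lo ≤ t)).filter (fun t => t ≤ hi - v)).card
      ≤ (Icc lo (hi - v)).card := card_le_card fun t ht => by
    simp only [mem_filter, mem_Icc] at ht ⊢
    omega
  have h4 : ((A.filter (fun t => lo ≤ t)).filter (fun t => hi - v < t)).card ≤ Q.card :=
    card_le_card (filter_subset_filter _ (filter_subset _ _))
  rw [Int.card_Icc] at h3
  omega

/-- Freiman's `3k - 4` theorem for `n`-element sets, in contrapositive form: a set of `n` integers
with minimum `0`, maximum `v ≥ 2n - 3` and no nontrivial common divisor satisfies
`|A + A| ≥ 3n - 3`. Coprimality is expressed as `every common divisor divides 1`. -/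
def FreimanAt (n : ℕ) : Prop :=
  ∀ (A : Finset ℤ) (v : ℤ), A.card = n → (∀ x ∈ A, 0 ≤ x ∧ x ≤ v) → 0 ∈ A → v ∈ A →
    (∀ d : ℤ, (∀ x ∈ A, d ∣ x) → d ∣ 1) → 2 * (n : ℤ) ≤ v + 3 → 3 * n ≤ (A + A).card + 3

/-- In the inductive step for a set with small doubling the penultimate element is `v - 1`.
Let `A'` be `A` without its maximum `v`, with new maximum `w`. If `A'` has a common divisor, then
`A' + A'` and `v + A'` are disjoint. Otherwise induction, or `exists_long_interval` together with
`card_insert_far`, shows that `A' + A'` is so large that `v + x ∈ A' + A'` for all `x ∈ A'` except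
`w`; descending along these relations, `v - w` divides every `v - x`, whence `v - w = 1`. -/
lemma freiman_right {n : ℕ} (ih : ∀ k < n, FreimanAt k) (hn : 3 ≤ n) {A : Finset ℤ} {v : ℤ}
    (hcard : A.card = n) (hA : ∀ x ∈ A, 0 ≤ x ∧ x ≤ v) (h0 : 0 ∈ A) (hv : v ∈ A)
    (hg : ∀ d : ℤ, (∀ x ∈ A, d ∣ x) → d ∣ 1) (hlen : 2 * (n : ℤ) ≤ v + 3) :
    3 * n ≤ (A + A).card + 3 ∨ v - 1 ∈ A := by
  by_contra! hcon
  obtain ⟨hsmall, hv1⟩ := hcon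
  set A' := A.erase v with hA'
  have h0' : 0 ∈ A' := mem_erase.2 ⟨by omega, h0⟩
  have hcard' : A'.card + 1 = n := by rw [← hcard]; exact card_erase_add_one hv
  obtain ⟨w, hw, hwm⟩ := A'.exists_max_image id ⟨_, h0'⟩
  simp only [id] at hwm
  have hins : insert v A' = A := insert_erase hv
  have hA'sub : A' ⊆ A := erase_subset _ _
  have hA'lt : ∀ x ∈ A', x < v := fun x hx => by
    have := hA x (hA'sub hx)
    have := (mem_erase.1 hx).1
    omega
  have hA'b : ∀ x ∈ A', 0 ≤ x ∧ x ≤ w := fun x hx => ⟨(hA x (hA'sub hx)).1, hwm x hx⟩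
  have hCD := card_add_self_ge ⟨_, h0'⟩
  have hinj : Function.Injective (fun t : ℤ => v + t) := fun s t hst => by
    simpa using hst
  have hwv := hA'lt w hw
  have hw0 := (hA'b w hw).1
  have hsub2 : A' + A' ⊆ A + A := add_subset_add hA'sub hA'sub
  by_cases hd : ∃ d : ℤ, ¬ d ∣ 1 ∧ ∀ x ∈ A', d ∣ x
  · obtain ⟨d, hd1, hd⟩ := hd
    have hdv : ¬ d ∣ v := fun h => hd1 (hg d fun x hx => by
      rw [← hins] at hx
      rcases mem_insert.1 hx with rfl | hx
      · exact h
      · exact hd x hx)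
    have hsub : ((A' + A') ∪ A'.image (fun t => v + t)) ∪ {2 * v} ⊆ A + A := by
      intro y hy
      simp only [mem_union, mem_image, mem_singleton] at hy
      rcases hy with (hy | ⟨t, ht, rfl⟩) | rfl
      · exact hsub2 hy
      · exact add_mem_add hv (hA'sub ht)
      · exact mem_add.2 ⟨v, hv, v, hv, by ring⟩
    have d1 : Disjoint (A' + A') (A'.image (fun t => v + t)) := by
      rw [Finset.disjoint_left]
      intro y hy hy'
      obtain ⟨t, ht, rfl⟩ := mem_image.1 hy'
      obtain ⟨a, ha, b, hb, hab⟩ := mem_add.1 hy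
      have h1 := dvd_add (hd a ha) (hd b hb)
      rw [hab] at h1
      exact hdv ((dvd_add_left (hd t ht)).1 h1)
    have d2 : Disjoint ((A' + A') ∪ A'.image (fun t => v + t)) {2 * v} := by
      rw [Finset.disjoint_right]
      intro y hy hy'
      rw [mem_singleton] at hy
      subst hy
      simp only [mem_union, mem_image, mem_add] at hy'
      rcases hy' with ⟨a, ha, b, hb, hab⟩ | ⟨t, ht, h⟩
      · have := hA'lt a ha
        have := hA'lt b hb
        omega
      · have := hA'lt t ht
        omega
    have := card_le_card hsub
    rw [card_union_of_disjoint d2, card_union_of_disjoint d1, card_image_of_injective _ hinj,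
      card_singleton] at this
    omega
  push Not at hd
  have hd' : ∀ d : ℤ, (∀ x ∈ A', d ∣ x) → d ∣ 1 := fun d h => by
    by_contra hc
    obtain ⟨x, hx, hxd⟩ := hd d hc
    exact hxd (h x hx)
  have hbig : 3 * n ≤ (A' + A').card + 6 := by
    by_contra! hlt
    -- Induction handles sparse `A'`; dense `A'` have a long interval in `A' + A'`.
    by_cases hdense : 2 * ((n - 1 : ℕ) : ℤ) ≤ w + 3
    · have := ih (n - 1) (by omega) A' w (by omega) hA'b h0' hw hd' hdense
      omega
    · obtain ⟨lo, hi, hI, hlh⟩ := exists_long_interval le_rfl hA'b hA'b h0' hw (by omega)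
        (by omega)
      have := card_insert_far hA'b h0' hI (by omega) hwv (by omega)
      rw [hins] at this
      omega
  have hmem : ∀ x ∈ A', x ≠ w → v + x ∈ A' + A' := by
    intro x hx hxw
    by_contra hnot
    have hsub : (((A' + A') ∪ {v + x}) ∪ {v + w}) ∪ {2 * v} ⊆ A + A := by
      intro y hy
      simp only [mem_union, mem_singleton] at hy
      rcases hy with ((hy | rfl) | rfl) | rfl
      · exact hsub2 hy
      · exact add_mem_add hv (hA'sub hx)
      · exact add_mem_add hv (hA'sub hw)
      · exact mem_add.2 ⟨v, hv, v, hv, by ring⟩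
    have d1 : Disjoint (A' + A') {v + x} := disjoint_singleton_right.2 hnot
    have d2 : Disjoint ((A' + A') ∪ {v + x}) {v + w} := by
      rw [disjoint_singleton_right, mem_union, mem_singleton, mem_add]
      rintro (⟨a, ha, b, hb, hab⟩ | h)
      · have := hA'lt a ha
        have := hA'b b hb
        omega
      · omega
    have d3 : Disjoint (((A' + A') ∪ {v + x}) ∪ {v + w}) {2 * v} := by
      rw [disjoint_singleton_right, mem_union, mem_union, mem_singleton, mem_singleton, mem_add]
      have := hA'lt x hx
      rintro ((⟨a, ha, b, hb, hab⟩ | h) | h)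
      · have := hA'lt a ha
        have := hA'lt b hb
        omega
      · omega
      · omega
    have := card_le_card hsub
    rw [card_union_of_disjoint d3, card_union_of_disjoint d2, card_union_of_disjoint d1,
      card_singleton, card_singleton, card_singleton] at this
    omega
  -- Each `v - x` with `x ≠ w` is a sum of two smaller differences of the same kind.
  have hdvd : ∀ k : ℕ, ∀ x ∈ A', v - x = k → v - w ∣ v - x := by
    intro k
    induction k using Nat.strong_induction_on with
    | _ k ihk =>
      intro x hx hk
      by_cases hxw : x = w
      · rw [hxw]
      obtain ⟨a, ha, b, hb, hab⟩ := mem_add.1 (hmem x hx hxw)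
      have h1 := hA'lt a ha
      have h2 := hA'lt b hb
      have h3 := ihk (v - a).toNat (by omega) a ha (by omega)
      have h4 := ihk (v - b).toNat (by omega) b hb (by omega)
      have : v - x = (v - a) + (v - b) := by omega
      rw [this]
      exact dvd_add h3 h4
  have hdvd' : ∀ x ∈ A', v - w ∣ v - x := fun x hx =>
    hdvd (v - x).toNat x hx (by have := hA'lt x hx; omega)
  have he : v - w ∣ 1 := by
    have h1 := hdvd' 0 h0'
    rw [sub_zero] at h1
    refine hd' _ fun x hx => ?_
    have := dvd_sub h1 (hdvd' x hx)
    rwa [sub_sub_cancel] at this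
  have := Int.le_of_dvd one_pos he
  have hw1 : w = v - 1 := by omega
  exact hv1 (hw1 ▸ hA'sub hw)

lemma card_reflect (A B : Finset ℤ) (v w : ℤ) :
    (A.image (fun x => v - x) + B.image (fun x => w - x)).card = (A + B).card := by
  have : A.image (fun x => v - x) + B.image (fun x => w - x)
      = (A + B).image (fun x => (v + w) - x) := by
    ext y
    simp only [mem_add, mem_image]
    constructor
    · rintro ⟨_, ⟨a, ha, rfl⟩, _, ⟨b, hb, rfl⟩, rfl⟩
      exact ⟨a + b, ⟨a, ha, b, hb, rfl⟩, by ring⟩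
    · rintro ⟨_, ⟨a, ha, b, hb, rfl⟩, rfl⟩
      exact ⟨_, ⟨a, ha, rfl⟩, _, ⟨b, hb, rfl⟩, by ring⟩
  rw [this]
  exact card_image_of_injective _ fun s t hst => by simpa using hst

/-- The mirror image of `freiman_right`: the second smallest element is `1`. -/
lemma freiman_left {n : ℕ} (ih : ∀ k < n, FreimanAt k) (hn : 3 ≤ n) {A : Finset ℤ} {v : ℤ}
    (hcard : A.card = n) (hA : ∀ x ∈ A, 0 ≤ x ∧ x ≤ v) (h0 : 0 ∈ A) (hv : v ∈ A)
    (hg : ∀ d : ℤ, (∀ x ∈ A, d ∣ x) → d ∣ 1) (hlen : 2 * (n : ℤ) ≤ v + 3) :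
    3 * n ≤ (A + A).card + 3 ∨ 1 ∈ A := by
  have hinj : Function.Injective (fun t : ℤ => v - t) := fun s t hst => by
    simpa using hst
  have := freiman_right ih hn (A := A.image (fun x => v - x)) (v := v)
    (by rw [card_image_of_injective _ hinj, hcard])
    (fun x hx => by
      obtain ⟨t, ht, rfl⟩ := mem_image.1 hx
      have := hA t ht
      omega)
    (mem_image.2 ⟨v, hv, by ring⟩) (mem_image.2 ⟨0, h0, by ring⟩)
    (fun d hd => hg d fun x hx => by
      have h1 := hd v (mem_image.2 ⟨0, h0, by ring⟩)
      have h2 := hd (v - x) (mem_image.2 ⟨x, hx, rfl⟩)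
      have := dvd_sub h1 h2
      rwa [sub_sub_cancel] at this) hlen
  rw [card_reflect] at this
  refine this.imp id fun h => ?_
  obtain ⟨t, ht, htv⟩ := mem_image.1 h
  have : t = 1 := by omega
  exact this ▸ ht

/-- Freiman's `3k - 4` theorem, by strong induction. By `freiman_left` and `freiman_right` one may
assume `1, v - 1 ∈ A`. Let `y` be the first element of `A` at which the initial segment
`A ∩ [0, y]` becomes sparse, and `x` the element before it. Then `A ∩ [0, y]` and `A ∩ [x, v]` are
both smaller sets to which induction applies, and their sumsets overlap in at most three
elements. -/
lemma freimanAt (n : ℕ) : FreimanAt n := by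
  induction n using Nat.strong_induction_on with
  | _ n ih =>
  intro A v hcard hA h0 hv hg hlen
  by_cases hn : 3 ≤ n
  swap
  · have := card_add_self_ge ⟨_, h0⟩
    omega
  rcases freiman_left ih hn hcard hA h0 hv hg hlen with h | h1
  · exact h
  rcases freiman_right ih hn hcard hA h0 hv hg hlen with h | hv1
  · exact h
  set L : ℤ → Finset ℤ := fun y => A.filter (fun t => t ≤ y) with hL
  set Y := A.filter (fun y => 1 < y ∧ 2 * ((L y).card : ℤ) ≤ y + 3) with hY
  have hYv : v - 1 ∈ Y := by
    have hsub : L (v - 1) ⊆ A.erase v := fun t ht => by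
      simp only [hL, mem_filter] at ht
      exact mem_erase.2 ⟨by omega, ht.1⟩
    have h2 := card_le_card hsub
    have h3 := card_erase_add_one hv
    simp only [hY, mem_filter]
    exact ⟨hv1, by omega, by omega⟩
  obtain ⟨y, hy, hym⟩ := Y.exists_min_image id ⟨_, hYv⟩
  simp only [id] at hym
  have hyv := hym _ hYv
  obtain ⟨hyA, hy1, hylen⟩ := mem_filter.1 hy
  obtain ⟨x, hx, hxm⟩ := (A.filter (fun t => t < y)).exists_max_image id
    ⟨1, mem_filter.2 ⟨h1, hy1⟩⟩
  simp only [id] at hxm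
  have hx1 := hxm 1 (mem_filter.2 ⟨h1, hy1⟩)
  obtain ⟨hxA, hxy⟩ := mem_filter.1 hx
  have hgap : ∀ t ∈ A, t ≤ x ∨ y ≤ t := fun t ht => by
    by_contra! hcon
    have := hxm t (mem_filter.2 ⟨ht, hcon.2⟩)
    omega
  have hLy : L y = insert y (L x) := by
    ext t
    simp only [hL, mem_filter, mem_insert]
    constructor
    · rintro ⟨ht, hty⟩
      rcases hgap t ht with h | h
      · exact Or.inr ⟨ht, h⟩
      · exact Or.inl (by omega)
    · rintro (rfl | h)
      · exact ⟨hyA, le_rfl⟩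
      · exact ⟨h.1, by omega⟩
  have hLyc : (L y).card = (L x).card + 1 := by
    rw [hLy, card_insert_of_notMem]
    simp only [hL, mem_filter]
    omega
  have hLx : x + 3 ≤ 2 * ((L x).card : ℤ) := by
    by_cases hx1' : 1 < x
    · by_contra! hcon
      have := hym x (mem_filter.2 ⟨hxA, hx1', by omega⟩)
      omega
    · have hsub : ({0, 1} : Finset ℤ) ⊆ L x := fun t ht => by
        simp only [mem_insert, mem_singleton] at ht
        simp only [hL, mem_filter]
        rcases ht with rfl | rfl
        · exact ⟨h0, by omega⟩
        · exact ⟨h1, by omega⟩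
      have := card_le_card hsub
      rw [card_pair (by norm_num)] at this
      omega
  set B := A.filter (fun t => x ≤ t) with hB
  have hBc : (L x).card + B.card = n + 1 := by
    have h3 : L x ∪ B = A := by
      ext t
      simp only [hL, hB, mem_union, mem_filter]
      constructor
      · tauto
      · intro ht
        rcases le_total t x with h | h <;> tauto
    have h4 : L x ∩ B = {x} := by
      ext t
      simp only [hL, hB, mem_inter, mem_filter, mem_singleton]
      constructor
      · intro h
        omega
      · rintro rfl
        exact ⟨⟨hxA, le_rfl⟩, hxA, le_rfl⟩
    have := card_union_add_card_inter (L x) B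
    rw [h3, h4, card_singleton] at this
    omega
  have hLxpos : 2 ≤ (L x).card := by
    omega
  have hB2 : 3 ≤ B.card := by
    have hsub : ({x, v - 1, v} : Finset ℤ) ⊆ B := fun t ht => by
      simp only [mem_insert, mem_singleton] at ht
      simp only [hB, mem_filter]
      rcases ht with rfl | rfl | rfl
      · exact ⟨hxA, le_rfl⟩
      · exact ⟨hv1, by omega⟩
      · exact ⟨hv, by omega⟩
    have := card_le_card hsub
    rwa [card_insert_of_notMem (by simp; omega), card_pair (by omega)] at this
  have e1 := ih (L y).card (by omega) (L y) y rfl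
    (fun t ht => by
      simp only [hL, mem_filter] at ht
      exact ⟨(hA t ht.1).1, ht.2⟩)
    (by simp only [hL, mem_filter]; exact ⟨h0, by omega⟩)
    (by simp only [hL, mem_filter]; exact ⟨hyA, le_rfl⟩)
    (fun d hd => hd 1 (by simp only [hL, mem_filter]; exact ⟨h1, by omega⟩)) hylen
  have hinj : Function.Injective (fun t : ℤ => v - t) := fun s t hst => by
    simpa using hst
  have e2 := ih B.card (by omega) (B.image (fun t => v - t)) (v - x)
    (card_image_of_injective _ hinj)
    (fun t ht => by
      obtain ⟨s, hs, rfl⟩ := mem_image.1 ht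
      simp only [hB, mem_filter] at hs
      have := hA s hs.1
      omega)
    (mem_image.2 ⟨v, by simp only [hB, mem_filter]; exact ⟨hv, by omega⟩, by ring⟩)
    (mem_image.2 ⟨x, by simp only [hB, mem_filter]; exact ⟨hxA, le_rfl⟩, rfl⟩)
    (fun d hd => hd 1 (mem_image.2 ⟨v - 1, by
      simp only [hB, mem_filter]; exact ⟨hv1, by omega⟩, by ring⟩))
    (by omega)
  rw [card_reflect] at e2
  have h5 : ((L y + L y).erase (2 * y) ∪ (B + B).erase (2 * x)).card ≤ (A + A).card := by
    refine card_le_card (union_subset ?_ ?_)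
    · exact (erase_subset _ _).trans (add_subset_add (filter_subset _ _) (filter_subset _ _))
    · exact (erase_subset _ _).trans (add_subset_add (filter_subset _ _) (filter_subset _ _))
  have h6 : (((L y + L y).erase (2 * y)) ∩ ((B + B).erase (2 * x))).card ≤ 1 := by
    rw [← card_singleton (x + y)]
    refine card_le_card fun t ht => ?_
    simp only [mem_inter, mem_erase, mem_add, hL, hB, mem_filter] at ht
    obtain ⟨⟨h7, a, ⟨ha, hay⟩, b, ⟨hb, hby⟩, hab⟩, h8, a', ⟨ha', hax'⟩, b', ⟨hb', hbx'⟩, hab'⟩ := ht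
    rw [mem_singleton]
    have := hgap a ha
    have := hgap b hb
    have := hgap a' ha'
    have := hgap b' hb'
    omega
  have h7 := card_union_add_card_inter ((L y + L y).erase (2 * y)) ((B + B).erase (2 * x))
  have h8 := pred_card_le_card_erase (s := L y + L y) (a := 2 * y)
  have h9 := pred_card_le_card_erase (s := B + B) (a := 2 * x)
  omega

lemma card_add_affine (A B : Finset ℤ) {s t g : ℤ} (hg : 0 < g) :
    (A.image (fun i => s + g * i) + B.image (fun i => t + g * i)).card = (A + B).card := by
  have : A.image (fun i => s + g * i) + B.image (fun i => t + g * i)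
      = (A + B).image (fun i => (s + t) + g * i) := by
    ext y
    simp only [mem_add, mem_image]
    constructor
    · rintro ⟨_, ⟨a, ha, rfl⟩, _, ⟨b, hb, rfl⟩, rfl⟩
      exact ⟨a + b, ⟨a, ha, b, hb, rfl⟩, by ring⟩
    · rintro ⟨_, ⟨a, ha, b, hb, rfl⟩, rfl⟩
      exact ⟨_, ⟨a, ha, rfl⟩, _, ⟨b, hb, rfl⟩, by ring⟩
  rw [this]
  refine card_image_of_injective _ fun i j hij => ?_
  simpa [hg.ne'] using hij

/-- Freiman's `3k - 4` theorem in normal form: a set of integers with `|A + A| ≤ 3 |A| - 4` is an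
affine image of some `I ⊆ [0, a]` with `0, a ∈ I` and `a ≤ |A + A| - |A|`, and `I + I` contains an
interval of length at least `2 |A| - 1`. -/
theorem freiman {A : Finset ℤ} (hn : 2 ≤ A.card) (hS : (A + A).card + 4 ≤ 3 * A.card) :
    ∃ (s g a : ℤ) (I : Finset ℤ), 0 < g ∧ A = I.image (fun i => s + g * i) ∧ I.card = A.card ∧
      (∀ x ∈ I, 0 ≤ x ∧ x ≤ a) ∧ 0 ∈ I ∧ a ∈ I ∧ a + 4 ≤ 2 * (A.card : ℤ) ∧
      a + A.card ≤ (A + A).card ∧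
      ∃ lo hi : ℤ, (∀ y, lo ≤ y → y ≤ hi → y ∈ I + I) ∧ 2 * (A.card : ℤ) ≤ hi - lo + 2 := by
  obtain ⟨x₁, hx₁, x₂, hx₂, hne⟩ := one_lt_card.1 (show 1 < A.card by omega)
  have hne' : A.Nonempty := ⟨x₁, hx₁⟩
  obtain ⟨s, hs, hsm⟩ := A.exists_min_image id hne'
  obtain ⟨v, hv, hvm⟩ := A.exists_max_image id hne'
  simp only [id] at hsm hvm
  obtain ⟨f, hf, hf1⟩ := extract_gcd (s := A) (fun x => x - s) hne'
  set g := A.gcd (fun x => x - s) with hgdef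
  have hg0 : 0 ≤ g := Int.nonneg_of_normalize_eq_self (normalize_gcd)
  have hgne : g ≠ 0 := fun h => by
    have h1 := hf x₁ hx₁
    have h2 := hf x₂ hx₂
    rw [h] at h1 h2
    omega
  have hg : 0 < g := by omega
  have hA : A = (A.image f).image (fun i => s + g * i) := by
    rw [image_image]
    ext y
    simp only [mem_image, Function.comp]
    constructor
    · intro hy
      exact ⟨y, hy, by rw [← hf y hy]; ring⟩
    · rintro ⟨x, hx, rfl⟩
      rw [← hf x hx]
      simpa using hx
  have hinj : Function.Injective (fun i : ℤ => s + g * i) := fun i j hij => by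
    simpa [hg.ne'] using hij
  set I := A.image f with hI
  have hcard : I.card = A.card := by
    conv_rhs => rw [hA]
    exact (card_image_of_injective _ hinj).symm
  have hSS : (I + I).card = (A + A).card := by
    conv_rhs => rw [hA]
    exact (card_add_affine I I hg).symm
  have hmono : ∀ x ∈ A, ∀ y ∈ A, x ≤ y → f x ≤ f y := fun x hx y hy hxy => by
    have h1 := hf x hx
    have h2 := hf y hy
    refine le_of_mul_le_mul_left ?_ hg
    omega
  have hfs : f s = 0 := by
    have := hf s hs
    rw [sub_self] at this
    exact (mul_eq_zero.1 this.symm).resolve_left hgne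
  have hb : ∀ x ∈ I, 0 ≤ x ∧ x ≤ f v := by
    intro x hx
    obtain ⟨y, hy, rfl⟩ := mem_image.1 hx
    exact ⟨hfs ▸ hmono s hs y hy (hsm y hy), hmono y hy v hv (hvm y hy)⟩
  have h0 : 0 ∈ I := mem_image.2 ⟨s, hs, hfs⟩
  have hvI : f v ∈ I := mem_image.2 ⟨v, hv, rfl⟩
  have hgcd : ∀ d : ℤ, (∀ x ∈ I, d ∣ x) → d ∣ 1 := fun d hd => by
    rw [← hf1]
    exact dvd_gcd fun x hx => hd _ (mem_image.2 ⟨x, hx, rfl⟩)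
  have hlen : f v + 4 ≤ 2 * (A.card : ℤ) := by
    by_contra! hcon
    have := freimanAt A.card I (f v) hcard hb h0 hvI hgcd (by omega)
    omega
  refine ⟨s, g, f v, I, hg, hA, hcard, hb, h0, hvI, hlen, ?_, ?_⟩
  · have := card_add_ge le_rfl hb hb h0 hvI (by omega) ∅ (by simp)
    rw [union_empty] at this
    omega
  · obtain ⟨lo, hi, h1, h2⟩ := exists_long_interval le_rfl hb hb h0 hvI (by omega) (by omega)
    exact ⟨lo, hi, h1, by omega⟩

/-! ### The arc lemma for cosine sums -/

/-- Comparison of sums from comparison of counting functions: if below each threshold `x i` there are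
at least as many `y`'s as `x`'s, Hall's theorem matches each `x i` injectively with some
`y j ≤ x i`, at which the decreasing function `F` is at least as large. -/
lemma sum_le_sum_of_count {ι κ : Type*} [DecidableEq κ] (X : Finset ι) (Y : Finset κ) (x : ι → ℝ)
    (y : κ → ℝ) (F : ℝ → ℝ) (hF0 : ∀ j ∈ Y, 0 ≤ F (y j))
    (hF : ∀ i ∈ X, ∀ j ∈ Y, y j ≤ x i → F (x i) ≤ F (y j))
    (h : ∀ i ∈ X, (X.filter (fun j => x j ≤ x i)).card ≤ (Y.filter (fun j => y j ≤ x i)).card) :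
    ∑ i ∈ X, F (x i) ≤ ∑ j ∈ Y, F (y j) := by
  classical
  let t : X → Finset κ := fun i => Y.filter (fun j => y j ≤ x i)
  obtain ⟨f, hfi, hf⟩ := (all_card_le_biUnion_card_iff_exists_injective t).1 (fun S => by
    rcases S.eq_empty_or_nonempty with rfl | hS
    · simp
    obtain ⟨i, hi, him⟩ := S.exists_max_image (fun i => x i) hS
    have h1 : S.card ≤ (X.filter (fun j => x j ≤ x i)).card := by
      rw [← card_image_of_injective S Subtype.val_injective]
      refine card_le_card fun j hj => ?_
      obtain ⟨j, hj', rfl⟩ := mem_image.1 hj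
      exact mem_filter.2 ⟨j.2, him j hj'⟩
    refine (h1.trans (h i i.2)).trans (card_le_card ?_)
    exact subset_biUnion_of_mem t hi)
  have hfY : ∀ i : X, f i ∈ Y ∧ y (f i) ≤ x i := fun i => mem_filter.1 (hf i)
  calc ∑ i ∈ X, F (x i) = ∑ i : X, F (x i) := (sum_coe_sort X (fun i => F (x i))).symm
    _ ≤ ∑ i : X, F (y (f i)) := sum_le_sum fun i _ => hF i i.2 _ (hfY i).1 (hfY i).2
    _ = ∑ j ∈ univ.image f, F (y j) := (sum_image (f := fun j => F (y j)) hfi.injOn).symm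
    _ ≤ ∑ j ∈ Y, F (y j) := sum_le_sum_of_subset_of_nonneg
        (fun j hj => by obtain ⟨i, _, rfl⟩ := mem_image.1 hj; exact (hfY i).1)
        (fun j hj _ => hF0 j hj)

/-- If no half-open window of length `p / 2` holds more than `n` elements of `A`, the cosine sum of
`A` is at most that of a block of `D ≥ 2n - |A|` consecutive integers centred at `s`. A term with
negative cosine at distance `d` from `s` is moved to the other side of the inequality, where it
contributes as a point at distance `p / 2 - d`; the remaining inequality is a case of
`sum_le_sum_of_count`, whose counting hypothesis follows by overlapping two windows. -/
lemma sum_cos_le_sum_cos {A : Finset ℤ} {p s : ℝ} {n D : ℕ} (hp : 0 < p)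
    (hA : ∀ a ∈ A, |(a : ℝ) - s| ≤ p / 2)
    (h1 : ∀ x : ℝ, (A.filter (fun a : ℤ => x ≤ a ∧ (a : ℝ) < x + p / 2)).card ≤ n)
    (h2 : ∀ x : ℝ, (A.filter (fun a : ℤ => x < a ∧ (a : ℝ) ≤ x + p / 2)).card ≤ n)
    (hn : 2 * n ≤ A.card + D) (hD : (D : ℝ) ≤ p / 2) :
    ∑ a ∈ A, Real.cos (2 * Real.pi / p * (a - s)) ≤
      ∑ v ∈ Ioc ⌊s - D / 2⌋ (⌊s - D / 2⌋ + D), Real.cos (2 * Real.pi / p * (v - s)) := by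
  classical
  set T := Ioc ⌊s - D / 2⌋ (⌊s - (D : ℝ) / 2⌋ + (D : ℤ)) with hT
  have hTmem : ∀ v : ℤ, v ∈ T ↔ s - D / 2 < v ∧ (v : ℝ) ≤ s + D / 2 := by
    intro v
    rw [hT, mem_Ioc, Int.floor_lt, ← sub_le_iff_le_add, Int.le_floor]
    push_cast
    constructor
    · rintro ⟨h, h'⟩; exact ⟨h, by linarith⟩
    · rintro ⟨h, h'⟩; exact ⟨h, by linarith⟩
  have hTcard : T.card = D := by rw [hT, Int.card_Ioc]; omega
  set P := A.filter (fun a : ℤ => |(a : ℝ) - s| < p / 4) with hP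
  set Q := A.filter (fun a : ℤ => ¬ |(a : ℝ) - s| < p / 4) with hQ
  let F : ℝ → ℝ := fun d => Real.cos (2 * Real.pi / p * d)
  have hpi := Real.pi_pos
  have hcosabs : ∀ d : ℝ, Real.cos (2 * Real.pi / p * d) = F |d| := fun d => by
    show _ = Real.cos _
    rcases abs_cases d with ⟨h, _⟩ | ⟨h, _⟩
    · rw [h]
    · rw [h, mul_neg, Real.cos_neg]
  have hFrefl : ∀ d : ℝ, F (p / 2 - d) = - F d := fun d => by
    show Real.cos _ = - Real.cos _
    rw [← Real.cos_pi_sub]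
    congr 1
    field_simp
  have hFanti : ∀ d e : ℝ, 0 ≤ d → d ≤ e → e ≤ p / 2 → F e ≤ F d := fun d e h0 hde he => by
    refine Real.cos_le_cos_of_nonneg_of_le_pi (by positivity) ?_ (by gcongr)
    calc 2 * Real.pi / p * e ≤ 2 * Real.pi / p * (p / 2) := by gcongr
      _ = Real.pi := by field_simp
  have hF0 : ∀ d : ℝ, 0 ≤ d → d ≤ p / 4 → 0 ≤ F d := fun d h0 hd => by
    have : F (p / 4) = 0 := by
      have := hFrefl (p / 4)
      rw [show p / 2 - p / 4 = p / 4 by ring] at this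
      linarith
    rw [← this]
    exact hFanti _ _ h0 hd (by linarith)
  -- The right-hand points: reflections of the far elements of `A`, and the centred block.
  let y : ℤ ⊕ ℤ → ℝ := Sum.elim (fun a => p / 2 - |(a : ℝ) - s|) (fun v => |(v : ℝ) - s|)
  have hTd : ∀ v ∈ T, |(v : ℝ) - s| ≤ D / 2 := fun v hv => by
    have := (hTmem v).1 hv
    rw [abs_le]
    constructor <;> linarith
  have hy : ∀ j ∈ Q.disjSum T, 0 ≤ y j ∧ y j ≤ p / 4 := by
    intro j hj
    rcases mem_disjSum.1 hj with ⟨a, ha, rfl⟩ | ⟨v, hv, rfl⟩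
    · show 0 ≤ p / 2 - |(a : ℝ) - s| ∧ p / 2 - |(a : ℝ) - s| ≤ p / 4
      have h1 := (mem_filter.1 ha).2
      have h2 := hA a (mem_filter.1 ha).1
      constructor <;> linarith
    · show 0 ≤ |(v : ℝ) - s| ∧ |(v : ℝ) - s| ≤ p / 4
      have := hTd v hv
      exact ⟨abs_nonneg _, by linarith⟩
  have key := sum_le_sum_of_count P (Q.disjSum T) (fun a : ℤ => |(a : ℝ) - s|) y F
    (fun j hj => hF0 _ (hy j hj).1 (hy j hj).2)
    (fun i hi j hj hji => hFanti _ _ (hy j hj).1 hji (hA i (mem_filter.1 hi).1)) (by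
      intro i hi
      have hi4 := (mem_filter.1 hi).2
      have hi0 := abs_nonneg ((i : ℝ) - s)
      set w := |(i : ℝ) - s| with hw
      have e : ((Q.disjSum T).filter (fun j => y j ≤ w)).card =
          (Q.filter (fun a : ℤ => p / 2 - |(a : ℝ) - s| ≤ w)).card
          + (T.filter (fun v : ℤ => |(v : ℝ) - s| ≤ w)).card := by
        rw [← card_disjSum]
        congr 1
        ext j
        rcases j with j | j <;> simp [y]
      rw [e]
      by_cases hwD : w < D / 2
      · refine le_add_left (card_le_card fun a ha => ?_)
        simp only [mem_filter, hTmem] at ha ⊢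
        have := abs_le.1 ha.2
        exact ⟨⟨by linarith, by linarith⟩, ha.2⟩
      · have e1 : T.filter (fun v : ℤ => |(v : ℝ) - s| ≤ w) = T := by
          rw [filter_eq_self]
          intro v hv
          have := hTd v hv
          linarith
        rw [e1, hTcard]
        have f1 := h1 (s - w)
        have f2 := h2 (s - p / 2 + w)
        have f3 := card_union_add_card_inter
          (A.filter (fun a : ℤ => s - w ≤ a ∧ (a : ℝ) < s - w + p / 2))
          (A.filter (fun a : ℤ => s - p / 2 + w < a ∧ (a : ℝ) ≤ s - p / 2 + w + p / 2))
        have f4 : (P.filter (fun a : ℤ => |(a : ℝ) - s| ≤ w)).card ≤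
            ((A.filter (fun a : ℤ => s - w ≤ a ∧ (a : ℝ) < s - w + p / 2)) ∩
            (A.filter (fun a : ℤ => s - p / 2 + w < a ∧
              (a : ℝ) ≤ s - p / 2 + w + p / 2))).card := by
          refine card_le_card fun a ha => ?_
          simp only [hP, mem_filter, mem_inter] at ha ⊢
          have := abs_le.1 ha.2
          exact ⟨⟨ha.1.1, by linarith, by linarith⟩, ha.1.1, by linarith, by linarith⟩
        have f5 : A.card ≤
            ((A.filter (fun a : ℤ => s - w ≤ a ∧ (a : ℝ) < s - w + p / 2)) ∪
            (A.filter (fun a : ℤ => s - p / 2 + w < a ∧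
              (a : ℝ) ≤ s - p / 2 + w + p / 2))).card +
            (Q.filter (fun a : ℤ => p / 2 - |(a : ℝ) - s| ≤ w)).card := by
          refine (card_le_card fun a ha => ?_).trans (card_union_le _ _)
          simp only [hQ, mem_filter, mem_union]
          by_cases hc : p / 2 - |(a : ℝ) - s| ≤ w
          · exact Or.inr ⟨⟨ha, by linarith⟩, hc⟩
          · left
            have := abs_lt.1 (show |(a : ℝ) - s| < p / 2 - w by linarith)
            by_cases hc' : s - w ≤ a
            · exact Or.inl ⟨ha, hc', by linarith⟩
            · exact Or.inr ⟨ha, by linarith, by linarith⟩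
        omega)
  rw [sum_disjSum] at key
  have k1 : ∑ a ∈ A, Real.cos (2 * Real.pi / p * (a - s)) =
      ∑ a ∈ P, F |(a : ℝ) - s| + ∑ a ∈ Q, F |(a : ℝ) - s| := by
    rw [hP, hQ, sum_filter_add_sum_filter_not]
    exact sum_congr rfl fun a _ => hcosabs _
  have k2 : ∑ a ∈ Q, F (y (Sum.inl a)) = - ∑ a ∈ Q, F |(a : ℝ) - s| := by
    rw [← sum_neg_distrib]
    exact sum_congr rfl fun a _ => hFrefl _
  have k3 : ∑ v ∈ T, F (y (Sum.inr v)) = ∑ v ∈ T, Real.cos (2 * Real.pi / p * (v - s)) :=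
    sum_congr rfl fun a _ => (hcosabs _).symm
  rw [k1, ← k3]
  linarith

lemma sum_cos_Ioc (p s : ℝ) (N : ℤ) (D : ℕ) :
    2 * Real.sin (Real.pi / p) * ∑ v ∈ Ioc N (N + D), Real.cos (2 * Real.pi / p * (v - s)) =
      Real.sin (2 * Real.pi / p * (N + D - s) + Real.pi / p)
        - Real.sin (2 * Real.pi / p * (N - s) + Real.pi / p) := by
  induction D with
  | zero => simp
  | succ D ih =>
    have : Ioc N (N + (D + 1 : ℕ)) = insert (N + D + 1) (Ioc N (N + D)) := by
      ext v
      simp only [mem_Ioc, mem_insert]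
      push_cast
      omega
    rw [this, sum_insert (by simp), mul_add, ih]
    push_cast
    have h1 : Real.sin (2 * Real.pi / p * (N + (D + 1) - s) + Real.pi / p) =
      Real.sin (2 * Real.pi / p * (N + D + 1 - s) + Real.pi / p) := by ring_nf
    have h2 : Real.sin (2 * Real.pi / p * (N + D - s) + Real.pi / p) =
      Real.sin (2 * Real.pi / p * (N + D + 1 - s) - Real.pi / p) := by ring_nf
    rw [h1, h2, Real.sin_add (2 * Real.pi / p * (N + D + 1 - s)) (Real.pi / p), Real.sin_sub]
    ring

/-- The arc lemma: a large cosine sum forces many points in some window of length `p / 2`. -/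
theorem sum_cos_le {A : Finset ℤ} {p s : ℝ} {n D : ℕ} (hp : 1 < p)
    (hA : ∀ a ∈ A, |(a : ℝ) - s| ≤ p / 2)
    (h1 : ∀ x : ℝ, (A.filter (fun a : ℤ => x ≤ a ∧ (a : ℝ) < x + p / 2)).card ≤ n)
    (h2 : ∀ x : ℝ, (A.filter (fun a : ℤ => x < a ∧ (a : ℝ) ≤ x + p / 2)).card ≤ n)
    (hn : 2 * n ≤ A.card + D) (hD : (D : ℝ) ≤ p / 2) :
    Real.sin (Real.pi / p) * ∑ a ∈ A, Real.cos (2 * Real.pi / p * (a - s)) ≤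
      Real.sin (Real.pi * D / p) := by
  have hp0 : 0 < p := by linarith
  have hpi := Real.pi_pos
  have hs : 0 ≤ Real.sin (Real.pi / p) :=
    Real.sin_nonneg_of_nonneg_of_le_pi (by positivity) (div_le_self hpi.le hp.le)
  have hs' : 0 ≤ Real.sin (Real.pi * D / p) := by
    refine Real.sin_nonneg_of_nonneg_of_le_pi (by positivity) ?_
    rw [div_le_iff₀ hp0]
    gcongr
    linarith
  have e1 := mul_le_mul_of_nonneg_left (sum_cos_le_sum_cos hp0 hA h1 h2 hn hD) hs
  have e2 := sum_cos_Ioc p s ⌊s - D / 2⌋ D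
  set N := ⌊s - D / 2⌋
  have e3 : Real.sin (2 * Real.pi / p * (N + D - s) + Real.pi / p)
        - Real.sin (2 * Real.pi / p * (N - s) + Real.pi / p) ≤ 2 * Real.sin (Real.pi * D / p) := by
    rw [Real.sin_sub_sin]
    have : (2 * Real.pi / p * (N + D - s) + Real.pi / p
      - (2 * Real.pi / p * (N - s) + Real.pi / p)) / 2 = Real.pi * D / p := by ring
    rw [this]
    have := mul_le_mul_of_nonneg_left (Real.cos_le_one ((2 * Real.pi / p * (N + D - s)
      + Real.pi / p + (2 * Real.pi / p * (N - s) + Real.pi / p)) / 2))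
      (show 0 ≤ 2 * Real.sin (Real.pi * D / p) by positivity)
    linarith
  linarith

/-! ### Fourier coefficients on `ZMod p` -/

/-- Transfers the bound `n` on the intersection of `A` with progressions of `h + 1` terms to integer
representatives, in an interval of `h + 1` integers, of elements of the dilate `x • A`. -/
lemma card_window_le {p h n : ℕ} (A : Finset (ZMod p)) (x : ZMod p) (u : ℤ)
    (hx : IsUnit x)
    (hw : ∀ s d : ZMod p, IsUnit d →
      ((Icc (0 : ℤ) h).filter (fun i : ℤ => s + d * (i : ZMod p) ∈ A)).card ≤ n)
    (V : Finset ℤ) (hV : ∀ v ∈ V, u ≤ v ∧ v ≤ u + h)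
    (hVA : ∀ v ∈ V, ∃ a ∈ A, (v : ZMod p) = x * a) :
    V.card ≤ n := by
  obtain ⟨x, rfl⟩ := hx
  refine le_trans ?_ (hw ((x⁻¹ : (ZMod p)ˣ) * (u : ZMod p)) (x⁻¹ : (ZMod p)ˣ) (Units.isUnit _))
  rw [← card_image_of_injective V (sub_left_injective (b := u))]
  refine card_le_card fun i hi => ?_
  obtain ⟨v, hv, rfl⟩ := mem_image.1 hi
  obtain ⟨a, ha, hva⟩ := hVA v hv
  have := hV v hv
  rw [mem_filter, mem_Icc]
  refine ⟨by omega, ?_⟩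
  push_cast
  rw [hva]
  convert ha using 1
  rw [mul_sub, Units.inv_mul_cancel_left]
  ring

/-- The Fourier coefficient `∑ a ∈ A, e(x a / p)` of the indicator function of `A`, unnormalised. -/
noncomputable def expSum {p : ℕ} [NeZero p] (A : Finset (ZMod p)) (x : ZMod p) : ℂ :=
  ∑ a ∈ A, ZMod.stdAddChar (x * a)

section
variable {p : ℕ} [NeZero p]

lemma sum_std (b : ZMod p) :
    ∑ x : ZMod p, ZMod.stdAddChar (x * b) = if b = 0 then (p : ℂ) else 0 := by
  rw [AddChar.sum_mulShift b (ZMod.isPrimitive_stdAddChar p), ZMod.card]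
  split_ifs <;> simp

lemma expSum_zero (A : Finset (ZMod p)) : expSum A 0 = A.card := by
  simp [expSum]

lemma conj_expSum (A : Finset (ZMod p)) (x : ZMod p) :
    (starRingEnd ℂ) (expSum A x) = ∑ a ∈ A, ZMod.stdAddChar (x * (-a)) := by
  rw [expSum, map_sum]
  refine sum_congr rfl fun a _ => ?_
  rw [mul_neg, AddChar.map_neg_eq_conj]

/-- Parseval's identity. -/
lemma sum_norm_sq_expSum (A : Finset (ZMod p)) :
    ∑ x : ZMod p, ‖expSum A x‖ ^ 2 = p * A.card := by
  have h : ∑ x : ZMod p, expSum A x * (starRingEnd ℂ) (expSum A x) = p * A.card := by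
    calc ∑ x : ZMod p, expSum A x * (starRingEnd ℂ) (expSum A x)
        = ∑ x : ZMod p, ∑ a ∈ A, ∑ b ∈ A, ZMod.stdAddChar (x * (a - b)) := by
          refine sum_congr rfl fun x _ => ?_
          rw [conj_expSum, expSum, sum_mul_sum]
          refine sum_congr rfl fun a _ => sum_congr rfl fun b _ => ?_
          rw [← AddChar.map_add_eq_mul]
          ring_nf
      _ = ∑ a ∈ A, ∑ b ∈ A, ∑ x : ZMod p, ZMod.stdAddChar (x * (a - b)) := by
          rw [sum_comm]
          exact sum_congr rfl fun a _ => sum_comm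
      _ = ∑ a ∈ A, ∑ b ∈ A, if a = b then (p : ℂ) else 0 := by
          simp only [sum_std, sub_eq_zero]
      _ = p * A.card := by
          simp [mul_comm]
  have h2 : ((∑ x : ZMod p, ‖expSum A x‖ ^ 2 : ℝ) : ℂ) = ((p * A.card : ℝ) : ℂ) := by
    push_cast
    rw [← h]
    exact sum_congr rfl fun x _ => (Complex.mul_conj' _).symm
  exact_mod_cast h2

/-- The left-hand side counts, up to the factor `p`, the triples `(a, b, t)` with `a + b = t` and
`t ∈ A + A`; every pair `(a, b)` contributes exactly one. -/
lemma sum_expSum_mul (A : Finset (ZMod p)) :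
    ∑ x : ZMod p, expSum A x * expSum A x * (starRingEnd ℂ) (expSum (A + A) x)
      = p * A.card ^ 2 := by
  calc ∑ x : ZMod p, expSum A x * expSum A x * (starRingEnd ℂ) (expSum (A + A) x)
      = ∑ x : ZMod p, ∑ a ∈ A, ∑ b ∈ A, ∑ t ∈ A + A,
          ZMod.stdAddChar (x * (a + b - t)) := by
        refine sum_congr rfl fun x _ => ?_
        rw [conj_expSum, expSum, sum_mul_sum, sum_mul]
        refine sum_congr rfl fun a _ => ?_
        rw [sum_mul]
        refine sum_congr rfl fun b _ => ?_
        rw [mul_sum]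
        refine sum_congr rfl fun t _ => ?_
        rw [← AddChar.map_add_eq_mul, ← AddChar.map_add_eq_mul]
        ring_nf
    _ = ∑ a ∈ A, ∑ b ∈ A, ∑ t ∈ A + A, ∑ x : ZMod p, ZMod.stdAddChar (x * (a + b - t)) := by
        rw [sum_comm]
        refine sum_congr rfl fun a _ => ?_
        rw [sum_comm]
        exact sum_congr rfl fun b _ => sum_comm
    _ = ∑ a ∈ A, ∑ b ∈ A, (p : ℂ) := by
        refine sum_congr rfl fun a ha => sum_congr rfl fun b hb => ?_
        simp only [sum_std, sub_eq_zero]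
        rw [sum_ite_eq, if_pos (add_mem_add ha hb)]
    _ = p * A.card ^ 2 := by
        simp
        ring

/-- A set with small sumset has a large nontrivial Fourier coefficient: their maximum is at least
`|A|² / |A + A|`. This follows from `sum_expSum_mul` by Cauchy–Schwarz and Parseval, after removing
the trivial frequency. -/
lemma card_sq_le_of_expSum_le {A : Finset (ZMod p)} {M : ℝ} (hM0 : 0 ≤ M)
    (hM : ∀ x ≠ 0, ‖expSum A x‖ ≤ M) (h1 : A.card ≤ (A + A).card)
    (h2 : (A + A).card + A.card ≤ p) (hA : A.Nonempty) :
    (A.card : ℝ) ^ 2 ≤ M * (A + A).card := by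
  set k : ℝ := (A.card : ℝ) with hk
  set N : ℝ := ((A + A).card : ℝ) with hN
  have hk0 : 0 < k := Nat.cast_pos.2 hA.card_pos
  have h1' : k ≤ N := Nat.cast_le.2 h1
  have h2' : N + k ≤ p := by rw [hk, hN]; exact_mod_cast h2
  have e0 := sum_expSum_mul A
  rw [← add_sum_erase _ _ (mem_univ (0 : ZMod p))] at e0
  have e1 := sum_norm_sq_expSum A
  rw [← add_sum_erase _ _ (mem_univ (0 : ZMod p))] at e1
  have e2 := sum_norm_sq_expSum (A + A)
  rw [← add_sum_erase _ _ (mem_univ (0 : ZMod p))] at e2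
  simp only [expSum_zero, Complex.norm_natCast, map_natCast] at e0 e1 e2
  set E := (univ : Finset (ZMod p)).erase 0 with hE
  have e3 : ∑ x ∈ E, expSum A x * expSum A x * (starRingEnd ℂ) (expSum (A + A) x)
      = ((k ^ 2 * (p - N) : ℝ) : ℂ) := by
    rw [hk, hN]
    push_cast
    linear_combination e0
  have e4 : k ^ 2 * (p - N) ≤ M * ∑ x ∈ E, ‖expSum A x‖ * ‖expSum (A + A) x‖ := by
    have e5 := norm_sum_le E
      (fun x => expSum A x * expSum A x * (starRingEnd ℂ) (expSum (A + A) x))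
    rw [e3, Complex.norm_real] at e5
    refine (le_abs_self _).trans (e5.trans ?_)
    rw [mul_sum]
    refine sum_le_sum fun x hx => ?_
    rw [norm_mul, norm_mul, Complex.norm_conj, mul_assoc]
    exact mul_le_mul_of_nonneg_right (hM x (mem_erase.1 hx).1) (by positivity)
  have e6 := sum_mul_sq_le_sq_mul_sq E (fun x => ‖expSum A x‖) (fun x => ‖expSum (A + A) x‖)
  have e7 : ∑ x ∈ E, ‖expSum A x‖ ^ 2 = k * (p - k) := by linear_combination e1
  have e8 : ∑ x ∈ E, ‖expSum (A + A) x‖ ^ 2 = N * (p - N) := by linear_combination e2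
  rw [e7, e8] at e6
  have e9 : k * (p - k) ≤ N * (p - N) := by nlinarith
  have hpN : 0 < p - N := by linarith
  have e10 : ∑ x ∈ E, ‖expSum A x‖ * ‖expSum (A + A) x‖ ≤ N * (p - N) := by
    refine le_of_sq_le_sq (e6.trans ?_) (by nlinarith)
    rw [sq (N * (p - N))]
    exact mul_le_mul_of_nonneg_right e9 (by nlinarith)
  have e11 := mul_le_mul_of_nonneg_left e10 hM0
  refine le_of_mul_le_mul_right (a := (p : ℝ) - N) ?_ hpN
  linarith

/-- If no progression of `h + 1 = (p + 1) / 2` terms holds more than `n` elements of `A`, then the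
nontrivial Fourier coefficients of `A` are at most `sin (π D / p) / sin (π / p)`, where
`D ≥ 2n - |A|`. The elements of `x • A` are lifted to integers within `p / 2` of the real number `s`
corresponding to the argument of the coefficient, and `sum_cos_le` applies. -/
lemma norm_expSum_le {h n D : ℕ} (hp1 : 1 < p) (hph : p = 2 * h + 1) (A : Finset (ZMod p))
    (x : ZMod p) (hx : IsUnit x)
    (hw : ∀ s d : ZMod p, IsUnit d →
      ((Icc (0 : ℤ) h).filter (fun i : ℤ => s + d * (i : ZMod p) ∈ A)).card ≤ n)
    (hn : 2 * n ≤ A.card + D) (hD : 2 * D ≤ p) :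
    Real.sin (Real.pi / p) * ‖expSum A x‖ ≤ Real.sin (Real.pi * D / p) := by
  have hp0 : (0 : ℝ) < p := by exact_mod_cast (by omega : 0 < p)
  have hpi := Real.pi_pos
  set z := expSum A x with hz
  set s : ℝ := z.arg * p / (2 * Real.pi) with hs
  let r : ZMod p → ℤ := fun a => (x * a).val + p * round ((s - (x * a).val) / p)
  have hr : ∀ a, ((r a : ℤ) : ZMod p) = x * a := fun a => by simp [r]
  have hrinj : Function.Injective r := fun a b hab => by
    have := congrArg (fun t : ℤ => (t : ZMod p)) hab
    simp only [hr] at this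
    exact hx.mul_left_cancel this
  have hrs : ∀ a, |(r a : ℝ) - s| ≤ p / 2 := fun a => by
    have h1 := abs_sub_round ((s - (x * a).val) / p)
    have h2 : (r a : ℝ) - s = -(p * ((s - (x * a).val) / p - round ((s - (x * a).val) / p))) := by
      simp only [r]
      push_cast
      field_simp
      ring
    rw [h2, abs_neg, abs_mul, abs_of_pos hp0]
    nlinarith
  have hnorm : ‖z‖ = ∑ a ∈ A, Real.cos (2 * Real.pi / p * (r a - s)) := by
    have h1 : (‖z‖ : ℂ) = z * Complex.exp (-(z.arg * Complex.I)) := by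
      have h0 := Complex.norm_mul_exp_arg_mul_I z
      calc (‖z‖ : ℂ) = ‖z‖ * Complex.exp (z.arg * Complex.I) *
            Complex.exp (-(z.arg * Complex.I)) := by
            rw [mul_assoc, ← Complex.exp_add, add_neg_cancel, Complex.exp_zero, mul_one]
        _ = _ := by rw [h0]
    have h2 : z * Complex.exp (-(z.arg * Complex.I)) =
        ∑ a ∈ A, Complex.exp (((2 * Real.pi / p * (r a - s) : ℝ) : ℂ) * Complex.I) := by
      generalize hθ : z.arg = θ at hs ⊢
      rw [hz, expSum, sum_mul]
      refine sum_congr rfl fun a _ => ?_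
      rw [← hr a, ZMod.stdAddChar_coe, ← Complex.exp_add]
      congr 1
      rw [hs]
      push_cast
      have : (Real.pi : ℂ) ≠ 0 := by exact_mod_cast hpi.ne'
      have : (p : ℂ) ≠ 0 := by exact_mod_cast hp0.ne'
      field_simp
      ring
    have h3 := congrArg Complex.re (h1.trans h2)
    rw [Complex.ofReal_re, Complex.re_sum] at h3
    rw [h3]
    exact sum_congr rfl fun a _ => Complex.exp_ofReal_mul_I_re _
  have hph' : (p : ℝ) = 2 * h + 1 := by exact_mod_cast hph
  have := sum_cos_le (A := A.image r) (p := p) (s := s) (n := n) (D := D)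
    (by exact_mod_cast hp1)
    (fun v hv => by obtain ⟨a, _, rfl⟩ := mem_image.1 hv; exact hrs a)
    (fun y => by
      refine card_window_le A x ⌈y⌉ hx hw _ (fun v hv => ?_) (fun v hv => ?_)
      · have h1 := (mem_filter.1 hv).2
        refine ⟨Int.ceil_le.2 h1.1, Int.lt_add_one_iff.1 ?_⟩
        have : (v : ℝ) < ⌈y⌉ + h + 1 := by
          have := Int.le_ceil y
          linarith
        exact_mod_cast this
      · obtain ⟨a, ha, rfl⟩ := mem_image.1 (mem_filter.1 hv).1
        exact ⟨a, ha, hr a⟩)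
    (fun y => by
      refine card_window_le A x (⌊y⌋ + 1) hx hw _ (fun v hv => ?_) (fun v hv => ?_)
      · have h1 := (mem_filter.1 hv).2
        refine ⟨Int.add_one_le_iff.2 (Int.floor_lt.2 h1.1), Int.lt_add_one_iff.1 ?_⟩
        have : (v : ℝ) < ⌊y⌋ + 1 + h + 1 := by
          have := Int.lt_floor_add_one y
          linarith
        exact_mod_cast this
      · obtain ⟨a, ha, rfl⟩ := mem_image.1 (mem_filter.1 hv).1
        exact ⟨a, ha, hr a⟩)
    (by rw [card_image_of_injective _ hrinj]; exact hn)
    (by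
      have : (2 * D : ℝ) ≤ p := by exact_mod_cast hD
      linarith)
  rw [sum_image hrinj.injOn, ← hnorm] at this
  exact this
end

/-! ### A half-length progression rich in `A` -/

lemma sin_mul_le {l x : ℝ} (hl : 1 ≤ l) (hx : 0 ≤ x) (hlx : l * x ≤ Real.pi) :
    Real.sin (l * x) ≤ l * Real.sin x := by
  have hl0 : 0 < l := by linarith
  have h := strictConcaveOn_sin_Icc.concaveOn.2 (show (0 : ℝ) ∈ Set.Icc 0 Real.pi from
    ⟨le_rfl, Real.pi_pos.le⟩) (show l * x ∈ Set.Icc 0 Real.pi from ⟨by positivity, hlx⟩)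
    (show 0 ≤ 1 - 1 / l by rw [sub_nonneg, div_le_one hl0]; exact hl)
    (show 0 ≤ 1 / l by positivity) (by ring)
  simp only [smul_eq_mul, mul_zero, Real.sin_zero, zero_add] at h
  rw [← mul_assoc, one_div_mul_cancel hl0.ne', one_mul] at h
  have := mul_le_mul_of_nonneg_left h hl0.le
  rwa [← mul_assoc, mul_one_div_cancel hl0.ne', one_mul] at this

/-- The equation for `c` in terms of the parameter `α = (R - 5) / 4`, where `R` is the square root
occurring in it. The lower bound `0 ≤ α` and the upper bound `α ≤ 1 / 5` come from `sin x < x` and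
`x - x³ / 6 < sin x`. -/
lemma exists_param {p : ℕ} (hp80 : 80 ≤ p) {c : ℝ} (hc0 : 0 < c) (hc1 : c < 1)
    (hc : (7 + Real.sqrt (8 * c * p * Real.sin (Real.pi / p)
      / Real.sin (Real.pi * c / 3) + 9)) * c = 4 + 12 / p) :
    ∃ α : ℝ, 0 ≤ α ∧ α ≤ 1 / 5 ∧ (3 + α) * (c * p) = p + 3 ∧
      (2 * α + 1) * (α + 2) * Real.sin (Real.pi * c / 3) = c * p * Real.sin (Real.pi / p) := by
  have hp' : (80 : ℝ) ≤ p := by exact_mod_cast hp80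
  have hp0 : (0 : ℝ) < p := by linarith
  have hpi := Real.pi_pos
  have hpi3 := Real.pi_gt_three
  have hpi4 := Real.pi_lt_d2
  set S := Real.sin (Real.pi * c / 3) with hS
  have hSpos : 0 < S := Real.sin_pos_of_pos_of_lt_pi (by positivity) (by nlinarith)
  set s := Real.sin (Real.pi / p) with hs
  have hpip : Real.pi / p ≤ 1 / 20 := by rw [div_le_iff₀ hp0]; linarith
  have hpip0 : 0 < Real.pi / p := by positivity
  have hs1 : s < Real.pi / p := Real.sin_lt hpip0
  have hs2 : Real.pi / p - (Real.pi / p) ^ 3 / 6 < s :=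
    Real.sin_gt_sub_cube hpip0
  have hs3 : Real.pi / p * (99 / 100) < s := by
    have : (Real.pi / p) ^ 2 ≤ (1 / 20) ^ 2 := by gcongr
    nlinarith
  have hps1 : p * s < Real.pi := by rwa [lt_div_iff₀ hp0, mul_comm] at hs1
  have hps2 : Real.pi * (99 / 100) < p * s := by
    have := mul_lt_mul_of_pos_left hs3 hp0
    rwa [← mul_assoc, mul_div_cancel₀ _ hp0.ne'] at this
  have hspos : 0 < s := by nlinarith
  set X := 8 * c * p * s / S with hX
  have hX0 : 0 ≤ X := by positivity
  set R := Real.sqrt (X + 9) with hR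
  have hR2 : R ^ 2 = X + 9 := Real.sq_sqrt (by linarith)
  have hR0 : 0 ≤ R := Real.sqrt_nonneg _
  have hXS : X * S = 8 * c * (p * s) := by rw [hX]; field_simp
  have hS1 : S < Real.pi * c / 3 := Real.sin_lt (by positivity)
  have hX16 : 16 ≤ X := by
    by_contra! hlt
    have h1 : X * S ≤ 16 * S := by gcongr
    have h2 : 8 * c * (Real.pi * (99 / 100)) < 8 * c * (p * s) := by gcongr
    have : 0 < c * Real.pi := by positivity
    linarith
  have hR5 : 5 ≤ R := Real.le_sqrt_of_sq_le (by linarith)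
  have hcp : (7 + R) * (c * p) = 4 * p + 12 := by
    have : (7 + R) * (c * p) = (7 + R) * c * p := by ring
    rw [this, hc]
    field_simp
  refine ⟨(R - 5) / 4, by linarith, ?_, by linarith, ?_⟩
  · by_contra! hlt
    have hRlt : 29 / 5 < R := by linarith
    have hc2 : c < 0.3243 := by
      by_contra! hcl
      have : 12.8 * (0.3243 * p) < (7 + R) * (c * p) := by
        apply mul_lt_mul (by linarith) (by gcongr) (by positivity) (by linarith)
      linarith
    have hX2 : 24.64 < X := by
      have : (29 / 5) ^ 2 < R ^ 2 := by gcongr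
      linarith
    set t := Real.pi * c / 3 with ht
    have ht0 : 0 < t := by positivity
    have ht1 : t < 0.341 := by
      have : Real.pi * c ≤ 3.15 * 0.3243 := by gcongr
      rw [ht]
      linarith
    have hb : t - t ^ 3 / 6 < S := Real.sin_gt_sub_cube ht0
    have t2 : t ^ 2 < 0.341 ^ 2 := by gcongr
    have t3 : t ^ 3 ≤ t * 0.341 ^ 2 := by
      rw [pow_succ, mul_comm]
      gcongr
    have hSlow : t * 0.9785 ≤ S := by linarith
    have h1 : 24.64 * (t * 0.9785) ≤ X * S := by
      apply mul_le_mul hX2.le hSlow (by positivity) hX0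
    have h2 : 8 * c * (p * s) ≤ 8 * c * Real.pi := by gcongr
    have h3 : c * Real.pi = 3 * t := by rw [ht]; ring
    linarith
  · linear_combination S / 8 * hR2 + hXS / 8

/-- A set with `|A| ≥ c p` and `|A + A| ≤ p - |A|` meets some progression of `h + 1 = (p + 1) / 2`
terms in at least `(|A + A| + 4) / 3` elements. Otherwise `norm_expSum_le` bounds all nontrivial
Fourier coefficients, `card_sq_le_of_expSum_le` bounds one from below, and the two contradict each
other by the choice of `c`. -/
theorem exists_window {p h : ℕ} [Fact p.Prime] (hp80 : 80 ≤ p) (hph : p = 2 * h + 1) {c : ℝ}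
    (hc0 : 0 < c) (hc1 : c < 1)
    (hc : (7 + Real.sqrt (8 * c * p * Real.sin (Real.pi / p)
      / Real.sin (Real.pi * c / 3) + 9)) * c = 4 + 12 / p)
    {A : Finset (ZMod p)} (hA : c * p ≤ (A.card : ℝ)) (hN : (A + A).card + A.card ≤ p) :
    5 * p + 15 ≤ 16 * A.card ∧ ∃ s d : ZMod p, IsUnit d ∧ (A + A).card + 4 ≤
      3 * ((Icc (0 : ℤ) h).filter (fun i : ℤ => s + d * (i : ZMod p) ∈ A)).card := by
  obtain ⟨α, hα0, hα1, h1, h2⟩ := exists_param hp80 hc0 hc1 hc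
  have hp' : (80 : ℝ) ≤ p := by exact_mod_cast hp80
  have hp0 : (0 : ℝ) < p := by linarith
  have hpi := Real.pi_pos
  have hpi4 := Real.pi_lt_d2
  set k : ℝ := (A.card : ℝ) with hk
  set N : ℝ := ((A + A).card : ℝ) with hNdef
  have hk0 : 0 < k := lt_of_lt_of_le (by positivity) hA
  have hAne : A.Nonempty := by
    rw [← card_pos]
    rw [hk] at hk0
    exact_mod_cast hk0
  have hk1 : (p : ℝ) + 3 ≤ (3 + α) * k := by
    rw [← h1]
    gcongr
  have h16 : 5 * p + 15 ≤ 16 * A.card := by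
    have h3 : (3 + α) * k ≤ (3 + 1 / 5) * k := by gcongr
    have : 5 * (p : ℝ) + 15 ≤ 16 * k := by linarith
    rw [hk] at this
    exact_mod_cast this
  refine ⟨h16, ?_⟩
  by_contra! hcon
  have hNk : N + k ≤ p := by rw [hNdef, hk]; exact_mod_cast hN
  have hkN : A.card ≤ (A + A).card := card_le_card_add_self
  have hNle : N ≤ (2 + α) * k - 3 := by linarith
  set n := ((A + A).card + 3) / 3 with hn
  set D := 2 * n - A.card with hD
  have hw : ∀ s d : ZMod p, IsUnit d →
      ((Icc (0 : ℤ) h).filter (fun i : ℤ => s + d * (i : ZMod p) ∈ A)).card ≤ n := by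
    intro s d hd
    have := hcon s d hd
    omega
  have hDle : 3 * (D : ℝ) ≤ (1 + 2 * α) * k := by
    by_cases hDz : D = 0
    · rw [hDz]
      simp only [Nat.cast_zero, mul_zero]
      positivity
    · have : 3 * D + 3 * A.card ≤ 2 * (A + A).card + 6 := by omega
      have : 3 * (D : ℝ) + 3 * k ≤ 2 * N + 6 := by rw [hk, hNdef]; exact_mod_cast this
      linarith
  -- `η ≥ c` is the actual density; the case `η > c` is reduced to `η = c` by concavity of the sine.
  set η := k / p with hη
  have hηp : η * p = k := by rw [hη]; field_simp
  have hη1 : η ≤ 1 := by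
    rw [hη, div_le_one hp0]
    have : 0 ≤ N := Nat.cast_nonneg _
    linarith
  have hη0 : 0 < η := by positivity
  have hs : 0 < Real.sin (Real.pi / p) :=
    Real.sin_pos_of_pos_of_lt_pi (by positivity) (div_lt_self hpi (by linarith))
  set M := (1 + 2 * α) * Real.sin (Real.pi * η / 3) / Real.sin (Real.pi / p) with hM
  have hsη : 0 < Real.sin (Real.pi * η / 3) :=
    Real.sin_pos_of_pos_of_lt_pi (by positivity) (by nlinarith)
  have hM0 : 0 ≤ M := by positivity
  have hbound : ∀ x : ZMod p, x ≠ 0 → ‖expSum A x‖ ≤ M := by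
    intro x hx
    have e1 := norm_expSum_le (D := D) (by omega) hph A x (isUnit_iff_ne_zero.2 hx) hw
      (by omega) (by omega)
    have e2 : Real.sin (Real.pi * D / p) ≤ Real.sin ((1 + 2 * α) * (Real.pi * η / 3)) := by
      apply Real.sin_le_sin_of_le_of_le_pi_div_two
      · have : 0 ≤ Real.pi * D / p := by positivity
        linarith
      · have : (1 + 2 * α) * (Real.pi * η / 3) ≤ (1 + 2 * (1 / 5)) * (Real.pi * 1 / 3) := by
          gcongr
        linarith
      · rw [div_le_iff₀ hp0]
        calc Real.pi * D = Real.pi / 3 * (3 * D) := by ring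
          _ ≤ Real.pi / 3 * ((1 + 2 * α) * k) := by gcongr
          _ = _ := by rw [← hηp]; ring
    have e3 := sin_mul_le (l := 1 + 2 * α) (x := Real.pi * η / 3) (by linarith) (by positivity) (by
      have : (1 + 2 * α) * (Real.pi * η / 3) ≤ (1 + 2 * (1 / 5)) * (Real.pi * 1 / 3) := by
          gcongr
      linarith)
    rw [hM, le_div_iff₀ hs, mul_comm]
    exact (e1.trans e2).trans e3
  have key := card_sq_le_of_expSum_le hM0 hbound hkN hN hAne
  rw [← hk, ← hNdef] at key
  have e4 := sin_mul_le (l := η / c) (x := Real.pi * c / 3)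
    (by rw [one_le_div hc0, hη, le_div_iff₀ hp0]; exact hA) (by positivity) (by
      have : η / c * (Real.pi * c / 3) = Real.pi * η / 3 := by field_simp
      rw [this]
      nlinarith)
  have e5 : η / c * (Real.pi * c / 3) = Real.pi * η / 3 := by field_simp
  rw [e5] at e4
  have e6 : M * Real.sin (Real.pi / p) = (1 + 2 * α) * Real.sin (Real.pi * η / 3) := by
    rw [hM]; field_simp
  have e7 : (1 + 2 * α) * (2 + α) * Real.sin (Real.pi * η / 3) ≤ k * Real.sin (Real.pi / p) := by
    calc (1 + 2 * α) * (2 + α) * Real.sin (Real.pi * η / 3)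
        ≤ (1 + 2 * α) * (2 + α) * (η / c * Real.sin (Real.pi * c / 3)) := by gcongr
      _ = η / c * ((2 * α + 1) * (α + 2) * Real.sin (Real.pi * c / 3)) := by ring
      _ = k * Real.sin (Real.pi / p) := by rw [h2, ← hηp]; field_simp
  have e8 : k ^ 2 * Real.sin (Real.pi / p) ≤
      (1 + 2 * α) * Real.sin (Real.pi * η / 3) * ((2 + α) * k - 3) := by
    calc k ^ 2 * Real.sin (Real.pi / p) ≤ M * N * Real.sin (Real.pi / p) := by gcongr
      _ = (1 + 2 * α) * Real.sin (Real.pi * η / 3) * N := by rw [← e6]; ring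
      _ ≤ _ := by gcongr
  have e9 := mul_le_mul_of_nonneg_left e7 hk0.le
  have e10 : 0 < (1 + 2 * α) * Real.sin (Real.pi * η / 3) := by positivity
  linarith

/-! ### Dilates of an initial segment -/

lemma not_near_multiple {p l x q : ℤ} (hp : 0 < p) (h1 : l < x) (h2 : x < p - l) :
    ¬ |x - p * q| ≤ l := by
  intro h
  obtain ⟨h3, h4⟩ := abs_le.1 h
  rcases le_or_gt q 0 with hq | hq
  · have : p * q ≤ 0 := mul_nonpos_of_nonneg_of_nonpos hp.le hq
    omega
  · have : p * 1 ≤ p * q := mul_le_mul_of_nonneg_left hq hp.le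
    omega

/-- No multiplier `m` can keep all products `m j` with `1 ≤ j ≤ 4k - p - 2` within `l = p - 2k` of
the multiples of `p`. One may replace `m` by `μ = |m - p q₀|`, where `2 ≤ μ ≤ l`. If `μ < p - 2 l`,
the multiples of `μ` cannot step over the gap `(l, p - l)`. Otherwise `2 μ` must lie beyond the gap,
so `μ` is close to `p / 3`, and taking three more steps moves by only `|3 μ - p|` modulo `p`, which
brings `2 μ` down or `μ` up into the gap. -/
lemma dilate_false {p k m : ℤ} (h3p : ¬ 3 ∣ p) (hp80 : 80 ≤ p) (hm2 : 2 ≤ m) (hmp : m ≤ p - 2)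
    (hk : 5 * p + 15 ≤ 16 * k)
    (H : ∀ j : ℤ, 1 ≤ j → j ≤ 4 * k - p - 2 → ∃ q : ℤ, |m * j - p * q| ≤ p - 2 * k) : False := by
  set l := p - 2 * k with hl
  have hp0 : 0 < p := by omega
  -- `m` is neither `1` nor `-1` modulo `p`, whence `μ ≥ 2`.
  obtain ⟨q₀, hq₀⟩ := H 1 le_rfl (by omega)
  set μ := |m * 1 - p * q₀| with hμ
  have hμ2 : 2 ≤ μ := by
    by_contra! hlt
    have h1 := abs_le.1 (show |m * 1 - p * q₀| ≤ 1 by omega)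
    rcases le_or_gt q₀ 0 with hq | hq
    · have : p * q₀ ≤ 0 := mul_nonpos_of_nonneg_of_nonpos hp0.le hq
      omega
    · have : p * 1 ≤ p * q₀ := mul_le_mul_of_nonneg_left hq hp0.le
      omega
  have Hμ : ∀ j : ℤ, 1 ≤ j → j ≤ 4 * k - p - 2 → ∃ q : ℤ, |μ * j - p * q| ≤ l := by
    intro j hj1 hj2
    obtain ⟨q, hq⟩ := H j hj1 hj2
    rcases abs_choice (m * 1 - p * q₀) with h | h
    · refine ⟨q - q₀ * j, ?_⟩
      rw [hμ, h]
      convert hq using 2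
      ring
    · refine ⟨-(q - q₀ * j), ?_⟩
      rw [hμ, h, ← abs_neg]
      convert hq using 2
      ring
  clear_value μ
  have gap : ∀ j q : ℤ, 1 ≤ j → j ≤ 4 * k - p - 2 → l < μ * j - p * q →
      ¬ μ * j - p * q < p - l := by
    intro j q hj1 hj2 h1 h2
    obtain ⟨q', hq'⟩ := Hμ j hj1 hj2
    refine not_near_multiple (q := q' - q) hp0 h1 h2 ?_
    convert hq' using 2
    ring
  have hl0 : 0 ≤ l := by omega
  by_cases hsmall : μ < p - 2 * l
  · have e1 := Int.emod_add_mul_ediv l μ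
    have e2 := Int.emod_nonneg l (show μ ≠ 0 by omega)
    have e3 := Int.emod_lt_of_pos l (show 0 < μ by omega)
    have e4 : 0 ≤ l / μ := Int.ediv_nonneg hl0 (by omega)
    have e5 : 2 * (l / μ) ≤ μ * (l / μ) := mul_le_mul_of_nonneg_right hμ2 e4
    have e6 : μ * (l / μ + 1) = μ * (l / μ) + μ := by ring
    exact gap (l / μ + 1) 0 (by omega) (by omega) (by omega) (by omega)
  · have h2 := gap 2 0 (by omega) (by omega) (by omega)
    have hne : 3 * μ - p ≠ 0 := fun h => h3p ⟨μ, by omega⟩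
    -- The gap is longer than `ε = |3 μ - p|`, so steps of size `ε` cannot cross it. The number of
    -- steps is the quotient of the distance to the gap by `ε`, plus one.
    rcases lt_or_gt_of_ne hne with hε | hε
    · set ε := p - 3 * μ with hεdef
      set x := 2 * μ - (p - l) with hx
      have e1 := Int.emod_add_mul_ediv x ε
      have e2 := Int.emod_nonneg x (show ε ≠ 0 by omega)
      have e3 := Int.emod_lt_of_pos x (show 0 < ε by omega)
      have e4 : 0 ≤ x / ε := Int.ediv_nonneg (by omega) (by omega)
      have e5 : x / ε ≤ x := Int.ediv_le_self _ (by omega)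
      have e6 : μ * (3 * (x / ε + 1) + 2) - p * (x / ε + 1) = 2 * μ - ε - ε * (x / ε) := by
        rw [hεdef]; ring
      exact gap (3 * (x / ε + 1) + 2) (x / ε + 1) (by omega) (by omega) (by omega) (by omega)
    · set ε := 3 * μ - p with hεdef
      set x := l - μ with hx
      have e1 := Int.emod_add_mul_ediv x ε
      have e2 := Int.emod_nonneg x (show ε ≠ 0 by omega)
      have e3 := Int.emod_lt_of_pos x (show 0 < ε by omega)
      have e4 : 0 ≤ x / ε := Int.ediv_nonneg (by omega) (by omega)
      have e5 : x / ε ≤ x := Int.ediv_le_self _ (by omega)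
      have e6 : μ * (3 * (x / ε + 1) + 1) - p * (x / ε + 1) = μ + ε + ε * (x / ε) := by
        rw [hεdef]; ring
      exact gap (3 * (x / ε + 1) + 1) (x / ε + 1) (by omega) (by omega) (by omega) (by omega)

/-! ### From a rich progression to a contradiction -/

section
variable {p : ℕ} [Fact p.Prime]

lemma zmod_intCast_inj {i j : ℤ} (h : (i : ZMod p) = j) (h1 : i - j < p) (h2 : j - i < p) :
    i = j := by
  have h3 := (ZMod.intCast_eq_intCast_iff_dvd_sub i j p).1 h
  have := Int.eq_zero_of_abs_lt_dvd h3 (abs_lt.2 ⟨by omega, h2⟩)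
  omega

lemma zmod_exists_rep (x : ZMod p) (u : ℤ) : ∃ t : ℤ, u ≤ t ∧ t ≤ u + p - 1 ∧ (t : ZMod p) = x := by
  have hp0 : (0 : ℤ) < p := by exact_mod_cast (Fact.out : p.Prime).pos
  refine ⟨u + ((x.val : ℤ) - u) % p, ?_, ?_, ?_⟩
  · have := Int.emod_nonneg ((x.val : ℤ) - u) hp0.ne'
    omega
  · have := Int.emod_lt_of_pos ((x.val : ℤ) - u) hp0
    omega
  · have : u + ((x.val : ℤ) - u) % p = x.val - p * (((x.val : ℤ) - u) / p) := by
      have := Int.emod_add_mul_ediv ((x.val : ℤ) - u) p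
      omega
    rw [this]
    simp

lemma card_le_card_zmod {T : Finset ℤ} {S : Finset (ZMod p)} {u : ℤ} {s d : ZMod p} (hd : d ≠ 0)
    (hT : ∀ t ∈ T, u ≤ t ∧ t ≤ u + p - 1) (h : ∀ t ∈ T, s + d * (t : ZMod p) ∈ S) :
    T.card ≤ S.card := by
  refine card_le_card_of_injOn (fun t : ℤ => s + d * (t : ZMod p)) h ?_
  intro i hi j hj hij
  have h1 := hT i hi
  have h2 := hT j hj
  have : (i : ZMod p) = j := mul_left_cancel₀ hd (add_left_cancel hij)
  exact zmod_intCast_inj this (by omega) (by omega)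

/-- A half-length progression holding `n ≥ (|A + A| + 4) / 3` elements of `A` is short enough for
those elements to be added as integers, so that `freiman` applies to them. -/
lemma freiman_window {h : ℕ} (hph : p = 2 * h + 1) {A : Finset (ZMod p)} {s d : ZMod p}
    (hd : d ≠ 0) {n : ℕ} (hn2 : 2 ≤ n)
    (hn : ((Icc (0 : ℤ) h).filter (fun i : ℤ => s + d * (i : ZMod p) ∈ A)).card = n)
    (hN : (A + A).card + 4 ≤ 3 * n) :
    ∃ (s' d' : ZMod p) (a : ℤ) (I : Finset ℤ), d' ≠ 0 ∧ I.card = n ∧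
      (∀ i ∈ I, s' + d' * (i : ZMod p) ∈ A) ∧ (∀ x ∈ I, 0 ≤ x ∧ x ≤ a) ∧ 0 ∈ I ∧ a ∈ I ∧
      a + 4 ≤ 2 * (n : ℤ) ∧ a + n ≤ (A + A).card ∧ a ≤ h ∧
      ∃ lo hi : ℤ, (∀ y, lo ≤ y → y ≤ hi → y ∈ I + I) ∧ 2 * (n : ℤ) ≤ hi - lo + 2 := by
  set J := (Icc (0 : ℤ) h).filter (fun i : ℤ => s + d * (i : ZMod p) ∈ A) with hJ
  have hJJ : (J + J).card ≤ (A + A).card := by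
    refine card_le_card_zmod (u := 0) (s := s + s) hd ?_ ?_
    · intro t ht
      obtain ⟨i, hi, j, hj, rfl⟩ := mem_add.1 ht
      simp only [hJ, mem_filter, mem_Icc] at hi hj
      omega
    · intro t ht
      obtain ⟨i, hi, j, hj, rfl⟩ := mem_add.1 ht
      convert add_mem_add (mem_filter.1 hi).2 (mem_filter.1 hj).2 using 1
      push_cast
      ring
  obtain ⟨s₀, g, a, I, hg, hJI, hIc, hI, h0, ha, h1, h2, lo, hi, h3, h4⟩ :=
    freiman (A := J) (by omega) (by omega)
  have hmem : ∀ i ∈ I, s₀ + g * i ∈ J := fun i hi => by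
    rw [hJI]
    exact mem_image_of_mem _ hi
  have e1 := hmem 0 h0
  have e2 := hmem a ha
  simp only [hJ, mem_filter, mem_Icc] at e1 e2
  have ha0 := (hI a ha).1
  have ha1 : 1 ≤ a := by
    by_contra! hlt
    have : I ⊆ {0} := fun i hi => by
      have := hI i hi
      rw [mem_singleton]
      omega
    have := card_le_card this
    rw [card_singleton] at this
    omega
  have e3 : g * 1 ≤ g * a := mul_le_mul_of_nonneg_left ha1 hg.le
  have e4 : 1 * a ≤ g * a := mul_le_mul_of_nonneg_right hg ha0
  refine ⟨s + d * (s₀ : ZMod p), d * (g : ZMod p), a, I, mul_ne_zero hd ?_, by omega, ?_, hI, h0,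
    ha, by omega, by omega, by omega, lo, hi, h3, by omega⟩
  · intro hg0
    have : (g : ZMod p) = (0 : ℤ) := by rw [hg0]; simp
    have := zmod_intCast_inj this (by omega) (by omega)
    omega
  · intro i hi
    have := (mem_filter.1 (hmem i hi)).2
    convert this using 1
    push_cast
    ring

lemma affine_image {A : Finset (ZMod p)} (s : ZMod p) {d : ZMod p} (hd : d ≠ 0) :
    (A.image (fun x => d⁻¹ * (x - s))).card = A.card ∧
    (A.image (fun x => d⁻¹ * (x - s)) + A.image (fun x => d⁻¹ * (x - s))).card = (A + A).card := by
  have hinj : ∀ t : ZMod p, Function.Injective (fun x : ZMod p => d⁻¹ * (x - t)) := fun t x y hxy =>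
    sub_left_injective (mul_left_cancel₀ (inv_ne_zero hd) hxy)
  refine ⟨card_image_of_injective _ (hinj s), ?_⟩
  have : A.image (fun x => d⁻¹ * (x - s)) + A.image (fun x => d⁻¹ * (x - s))
      = (A + A).image (fun x => d⁻¹ * (x - (s + s))) := by
    ext y
    simp only [mem_add, mem_image]
    constructor
    · rintro ⟨_, ⟨a, ha, rfl⟩, _, ⟨b, hb, rfl⟩, rfl⟩
      exact ⟨a + b, ⟨a, ha, b, hb, rfl⟩, by ring⟩
    · rintro ⟨_, ⟨a, ha, b, hb, rfl⟩, rfl⟩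
      exact ⟨_, ⟨a, ha, rfl⟩, _, ⟨b, hb, rfl⟩, by ring⟩
  rw [this]
  exact card_image_of_injective _ (hinj _)

/-- If the dense part `I` of `B` supplied by `freiman_window` is in normal position, then all of `B`
lies in an arc of `h + 1` residues. As `I + I` contains a long interval, the complement of `B + B`
lifts to a set `C` of integers in the complementary arc. Subtracting `I` from `C` gives only
residues outside `B`; the sumset `I + (M - C)` with `M = max C` is therefore small, so it contains a
long interval by `exists_long_interval`, and `B` lies in the remaining arc. -/
lemma exists_arc {h : ℕ} (hph : p = 2 * h + 1) {B : Finset (ZMod p)} {n : ℕ} {a : ℤ} {I : Finset ℤ}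
    (hN : (B + B).card + B.card ≤ p) (hB16 : 5 * p + 15 ≤ 16 * B.card)
    (hn : (B + B).card + 4 ≤ 3 * n) (hnk : n ≤ B.card)
    (hIc : I.card = n) (hIB : ∀ i ∈ I, (i : ZMod p) ∈ B) (hI : ∀ x ∈ I, 0 ≤ x ∧ x ≤ a)
    (h0 : 0 ∈ I) (ha : a ∈ I) (ha2 : a + 4 ≤ 2 * (n : ℤ))
    {lo hi : ℤ} (hlo : ∀ y, lo ≤ y → y ≤ hi → y ∈ I + I) (hlen : 2 * (n : ℤ) ≤ hi - lo + 2) :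
    ∃ u : ℤ, ∀ b ∈ B, ∃ i : ℤ, 0 ≤ i ∧ i ≤ h ∧ b = u + i := by
  have hp0 : (0 : ℤ) < p := by exact_mod_cast (Fact.out : p.Prime).pos
  have hBB : ∀ y, lo ≤ y → y ≤ hi → (y : ZMod p) ∈ B + B := fun y h1 h2 => by
    obtain ⟨i, hi, j, hj, rfl⟩ := mem_add.1 (hlo y h1 h2)
    rw [Int.cast_add]
    exact add_mem_add (hIB i hi) (hIB j hj)
  -- Integer representatives of the complement of `B + B`, all in one period and outside `[lo, hi]`.
  set C := (Icc (hi + 1) (lo + p - 1)).filter (fun y : ℤ => (y : ZMod p) ∉ B + B) with hC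
  have hCcard : p ≤ C.card + (B + B).card := by
    have h1 : (univ \ (B + B)).card ≤ C.card := by
      refine (card_le_card (t := C.image (fun y : ℤ => (y : ZMod p))) fun x hx => ?_).trans
        card_image_le
      obtain ⟨t, ht1, ht2, rfl⟩ := zmod_exists_rep x lo
      refine mem_image.2 ⟨t, ?_, rfl⟩
      have hx' := (mem_sdiff.1 hx).2
      simp only [hC, mem_filter, mem_Icc]
      refine ⟨⟨?_, by omega⟩, hx'⟩
      by_contra! hlt
      exact hx' (hBB t ht1 (by omega))
    have h2 := card_sdiff_add_card (univ : Finset (ZMod p)) (B + B)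
    rw [union_eq_left.2 (subset_univ _), card_univ, ZMod.card] at h2
    omega
  have hCne : C.Nonempty := by
    rw [← card_pos]
    omega
  obtain ⟨M, hM, hMm⟩ := C.exists_max_image id hCne
  obtain ⟨m, hm, hmm⟩ := C.exists_min_image id hCne
  simp only [id] at hMm hmm
  have hinj : Function.Injective (fun y : ℤ => M - y) := fun x y hxy => by simpa using hxy
  set C' := C.image (fun y => M - y) with hC'
  have hC'c : C'.card = C.card := card_image_of_injective _ hinj
  have hb : ∀ x ∈ C', 0 ≤ x ∧ x ≤ M - m := fun x hx => by
    obtain ⟨y, hy, rfl⟩ := mem_image.1 hx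
    have := hMm y hy
    have := hmm y hy
    omega
  have h0' : 0 ∈ C' := mem_image.2 ⟨M, hM, by ring⟩
  have hb' : M - m ∈ C' := mem_image.2 ⟨m, hm, rfl⟩
  have hMmem := mem_Icc.1 (mem_filter.1 hM).1
  have hmmem := mem_Icc.1 (mem_filter.1 hm).1
  have hnot : ∀ z ∈ I + C', ((M - z : ℤ) : ZMod p) ∉ B := by
    intro z hz hzB
    obtain ⟨i, hi, c, hc, rfl⟩ := mem_add.1 hz
    obtain ⟨y, hy, rfl⟩ := mem_image.1 hc
    refine (mem_filter.1 hy).2 ?_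
    have := add_mem_add hzB (hIB i hi)
    convert this using 1
    push_cast
    ring
  have hsum : (I + C').card + B.card ≤ p := by
    have h1 : (I + C').card ≤ (univ \ B).card := by
      refine card_le_card_zmod (u := 0) (s := (M : ZMod p)) (d := -1) (by simp) ?_ ?_
      · intro t ht
        obtain ⟨i, hi, c, hc, rfl⟩ := mem_add.1 ht
        have := hI i hi
        have := hb c hc
        omega
      · intro t ht
        rw [mem_sdiff]
        refine ⟨mem_univ _, ?_⟩
        convert hnot t ht using 2
        push_cast
        ring
    have h2 := card_sdiff_add_card (univ : Finset (ZMod p)) B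
    rw [union_eq_left.2 (subset_univ _), card_univ, ZMod.card] at h2
    omega
  have hlong : ∃ l r : ℤ, (∀ y, l ≤ y → y ≤ r → y ∈ I + C') ∧
      (I.card : ℤ) + C'.card ≤ r - l + 2 := by
    rcases le_total a (M - m) with hab | hab
    · exact exists_long_interval hab hI hb h0' hb' (by omega) (by omega)
    · have := exists_long_interval hab hb hI h0 ha (by omega) (by rw [add_comm C' I]; omega)
      rw [add_comm C' I, add_comm (C'.card : ℤ)] at this
      exact this
  obtain ⟨l, r, hlr, hlr'⟩ := hlong
  refine ⟨M - l + 1, fun b hb => ?_⟩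
  obtain ⟨t, ht1, ht2, rfl⟩ := zmod_exists_rep b (M - l + 1)
  refine ⟨t - (M - l + 1), by omega, ?_, by push_cast; ring⟩
  by_contra! hlt
  refine hnot (M + p - t) (hlr _ (by omega) (by omega)) ?_
  convert hb using 1
  push_cast
  simp

/-- The dilate `m • A` is disjoint from `A + A`. -/
lemma card_add_self_add_card_le {m : ℕ} (hm0 : (m : ZMod p) ≠ 0) {A : Finset (ZMod p)}
    (hA : ∀ x ∈ A, ∀ y ∈ A, ∀ z ∈ A, x + y ≠ m • z) : (A + A).card + A.card ≤ p := by
  rw [← card_image_of_injective A (mul_right_injective₀ hm0), ← card_union_of_disjoint]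
  · exact (card_le_univ _).trans (ZMod.card p).le
  · rw [Finset.disjoint_left]
    intro y hy hy'
    obtain ⟨a, ha, b, hb, rfl⟩ := mem_add.1 hy
    obtain ⟨z, hz, hzy⟩ := mem_image.1 hy'
    refine hA a ha b hb z hz ?_
    rw [nsmul_eq_mul]
    exact hzy.symm

/-- The additive structure supplied by a half-length progression rich in `A` is incompatible with
`m`-sum-freeness. By `exists_arc` the whole set `A` lies in such a progression, hence by
`freiman_window` it is an affine image of a set `I ⊆ [0, a]` with `I + I` containing an interval of
`2 |A| - 1` integers. The dilate of `I` by `m` avoids that interval up to translation; every `j` with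
`1 ≤ j ≤ 4 |A| - p - 2` is a difference of two elements of `I`, so `m j` is always close to a multiple
of `p`, against `dilate_false`. -/
theorem sum_free_false {h m : ℕ} (hph : p = 2 * h + 1) (hp80 : 80 ≤ p) (hm2 : 2 ≤ m)
    (hmp : m ≤ p - 2) {A : Finset (ZMod p)}
    (hA : ∀ x ∈ A, ∀ y ∈ A, ∀ z ∈ A, x + y ≠ m • z)
    (hN : (A + A).card + A.card ≤ p) (hA16 : 5 * p + 15 ≤ 16 * A.card)
    {s d : ZMod p} (hd : d ≠ 0) (hw : (A + A).card + 4 ≤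
      3 * ((Icc (0 : ℤ) h).filter (fun i : ℤ => s + d * (i : ZMod p) ∈ A)).card) : False := by
  have hkN : A.card ≤ (A + A).card := card_le_card_add_self
  have hp0 : (0 : ℤ) < p := by exact_mod_cast (Fact.out : p.Prime).pos
  -- Rectification of `A`: the whole set lies in a progression of `h + 1` terms.
  obtain ⟨s₁, d₁, hd₁, hcov⟩ : ∃ s₁ d₁ : ZMod p, d₁ ≠ 0 ∧ ∀ x ∈ A, ∃ i : ℤ, 0 ≤ i ∧ i ≤ h ∧
      x = s₁ + d₁ * (i : ZMod p) := by
    obtain ⟨s', d', a, I, hd', hIc, hIA, hI, h0, ha, ha2, -, hah, lo, hi, hlo, hlen⟩ :=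
      freiman_window hph hd (by omega) rfl hw
    obtain ⟨hB, hBB⟩ := affine_image (A := A) s' hd'
    set B := A.image (fun x => d'⁻¹ * (x - s')) with hBdef
    have hIB : ∀ i ∈ I, (i : ZMod p) ∈ B := fun i hi => by
      refine mem_image.2 ⟨_, hIA i hi, ?_⟩
      rw [add_sub_cancel_left, inv_mul_cancel_left₀ hd']
    obtain ⟨u, hu⟩ := exists_arc hph (by omega) (by omega) (by omega) (by
      rw [← hIc]
      refine card_le_card_zmod (u := 0) (s := 0) (d := 1) one_ne_zero
        (fun t ht => ?_) (fun t ht => ?_)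
      · have := hI t ht
        omega
      · simpa using hIB t ht) hIc hIB hI h0 ha ha2 hlo hlen
    refine ⟨s' + d' * u, d', hd', fun x hx => ?_⟩
    obtain ⟨i, hi0, hih, hi⟩ := hu _ (mem_image_of_mem _ hx)
    refine ⟨i, hi0, hih, ?_⟩
    have := congrArg (fun t => s' + d' * t) hi
    simp only [mul_inv_cancel_left₀ hd'] at this
    rw [add_sub_cancel] at this
    rw [this]
    ring
  -- With `A` inside the progression, the rich part is everything and `n = |A|`.
  have hfull : ((Icc (0 : ℤ) h).filter (fun i : ℤ => s₁ + d₁ * (i : ZMod p) ∈ A)).card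
      = A.card := by
    apply le_antisymm
    · refine card_le_card_zmod (u := 0) (s := s₁) hd₁ (fun t ht => ?_)
        (fun t ht => (mem_filter.1 ht).2)
      have := mem_Icc.1 (mem_filter.1 ht).1
      omega
    · refine (card_le_card fun x hx => ?_).trans
        (card_image_le (f := fun i : ℤ => s₁ + d₁ * (i : ZMod p)))
      obtain ⟨i, hi0, hih, rfl⟩ := hcov x hx
      exact mem_image.2 ⟨i, mem_filter.2 ⟨mem_Icc.2 ⟨hi0, hih⟩, hx⟩, rfl⟩
  obtain ⟨s', d', a, I, hd', hIc, hIA, hI, h0, ha, -, haN, -, lo, hi, hlo, hlen⟩ :=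
      freiman_window hph hd₁ (by omega) hfull (by omega)
  set k := A.card with hk
  set r : ZMod p := ((m : ZMod p) - 2) * s' * d'⁻¹ with hr
  have hrd : d' * r = ((m : ZMod p) - 2) * s' := by rw [hr]; field_simp
  -- `m`-sum-freeness, in coordinates: `r + m i` is never in the interval `[lo, hi]` modulo `p`.
  have hrep : ∀ i ∈ I, ∃ t : ℤ, hi + 1 ≤ t ∧ t ≤ lo + p - 1 ∧
      (t : ZMod p) = r + (m : ZMod p) * (i : ZMod p) := by
    intro i hiI
    obtain ⟨t, ht1, ht2, ht⟩ := zmod_exists_rep (r + (m : ZMod p) * (i : ZMod p)) lo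
    refine ⟨t, ?_, by omega, ht⟩
    by_contra! hlt
    obtain ⟨x, hx, y, hy, hxy⟩ := mem_add.1 (hlo t ht1 (by omega))
    refine hA _ (hIA x hx) _ (hIA y hy) _ (hIA i hiI) ?_
    have h1 : (x : ZMod p) + y = r + (m : ZMod p) * (i : ZMod p) := by
      rw [← ht, ← hxy]
      push_cast
      rfl
    rw [nsmul_eq_mul]
    linear_combination d' * h1 + hrd
  refine dilate_false (p := p) (k := k) (m := m) ?_ (by omega) (by omega) (by omega) (by omega) ?_
  · intro h3
    have h3' : 3 ∣ p := by exact_mod_cast h3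
    have := (Nat.prime_dvd_prime_iff_eq Nat.prime_three Fact.out).1 h3'
    omega
  intro j hj1 hj2
  -- Otherwise `I` and `I + j` are disjoint in `[0, a + j]`, where `a` is at most `p - 2 k`.
  have hdiff : ∃ i ∈ I, i + j ∈ I := by
    by_contra! hcon
    have hinj : Function.Injective (fun i : ℤ => i + j) := fun x y hxy => by simpa using hxy
    have h1 : Disjoint I (I.image (fun i => i + j)) := by
      rw [Finset.disjoint_right]
      intro y hy
      obtain ⟨i, hi, rfl⟩ := mem_image.1 hy
      exact hcon i hi
    have h2 : I ∪ I.image (fun i => i + j) ⊆ Icc 0 (a + j) := by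
      intro y hy
      rw [mem_Icc]
      rcases mem_union.1 hy with hy | hy
      · have := hI y hy
        omega
      · obtain ⟨i, hi, rfl⟩ := mem_image.1 hy
        have := hI i hi
        omega
    have h3 := card_le_card h2
    rw [card_union_of_disjoint h1, card_image_of_injective _ hinj, Int.card_Icc] at h3
    omega
  obtain ⟨i, hi1, hi2⟩ := hdiff
  obtain ⟨t, ht1, ht2, ht⟩ := hrep i hi1
  obtain ⟨t', ht1', ht2', ht'⟩ := hrep (i + j) hi2
  have hdvd : ((t' - t : ℤ) : ZMod p) = ((m * j : ℤ) : ZMod p) := by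
    push_cast at ht' ⊢
    rw [ht, ht']
    ring
  obtain ⟨q, hq⟩ := (ZMod.intCast_eq_intCast_iff_dvd_sub _ _ p).1 hdvd
  refine ⟨q, ?_⟩
  rw [← hq, sub_sub_cancel, abs_le]
  omega
end

end

theorem stmt3 (p : ℕ) (hp : p.Prime) (hp80 : 80 ≤ p)
    (m : ℕ) (hm2 : 2 ≤ m) (hmp : m ≤ p - 2)
    (c : ℝ) (hc0 : 0 < c) (hc1 : c < 1)
    (hc : (7 + Real.sqrt (8 * c * p * Real.sin (Real.pi / p)
      / Real.sin (Real.pi * c / 3) + 9)) * c = 4 + 12 / p)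
    (A : Finset (ZMod p))
    (hA : ∀ x ∈ A, ∀ y ∈ A, ∀ z ∈ A, x + y ≠ m • z) :
    (A.card : ℝ) < c * p := by
  have : Fact p.Prime := ⟨hp⟩
  obtain ⟨h, hph⟩ := hp.odd_of_ne_two (by omega)
  by_contra! hcon
  have hm0 : (m : ZMod p) ≠ 0 := by
    rw [Ne, ZMod.natCast_eq_zero_iff]
    exact Nat.not_dvd_of_pos_of_lt (by omega) (by omega)
  have hN := card_add_self_add_card_le hm0 hA
  obtain ⟨h16, s, d, hd, hw⟩ := exists_window hp80 hph hc0 hc1 hc hcon hN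
  exact sum_free_false hph hp80 hm2 hmp hA hN h16 hd.ne_zero hw
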